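/- arXiv:2504.15851 — 4 statements merged into one kernel-verified Lean document; each statement's English description precedes it below -/
import Mathlib

section
/- (Shapiro) Suppose x* is a solution of NLP(p*) with (unique) multipliers (y*, z*) at which SMFCQ and SSOSC hold, and let x(p) be the locally unique solution map with x(p*) = x*. Then x(·) is directionally differentiable at p* in every direction h ∈ ℝ^ℓ, and the directional derivative x'(p*; h) is the unique solution of the quadratic program: minimize over d the quantity ½ dᵀ ∇²_{xx}L(x*,y*,z*,p*) d + hᵀ ∇²_{xp}L(x*,y*,z*,p*) d subject to d ∈ K_{p*}(x*, z*; h). -/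
/-!
The directional derivative is found by comparing values of the objective along feasible curves. No
KKT points, and in particular no multipliers, are needed at the perturbed parameters `p + t k`.

Write `Λ(x, p) = L(x, y, z, p)` and call `d` *strictly critical* if it lies in the directional
critical set `K` and satisfies the linearized weakly active constraints with strict inequality.

* Feasible curves. By SMFCQ the map formed by the equality and strongly active constraints is a
  submersion in `x`, so the inverse function theorem gives, for each strictly critical `d`, a curve
  `c(t) = x + t d + o(t)` along which these constraints vanish; the remaining ones hold for small
  `t` (`feasible_curve`). Hence `f = Λ` along `c`. Strictly critical directions exist
  (`strictDirCrit_nonempty`) and are dense in `K`.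
* Optimality of the solution map. A minimizer over the feasible points of a small ball tends to `x`
  as `t ↓ 0`, so it is eventually a local solution and equals `X(t) = xmap(p + t k)` by local
  uniqueness (`minimizer_on_ray`). Thus `X(t) → x` and `f(X(t)) ≤ f(c(t))`, that is,
  `Λ(X) - ∑ z_j h_j(X) ≤ Λ(c)`.
* Limits. Put `s = ‖X - x‖ + t`. Along an ultrafilter finer than `t ↓ 0` the pair `(X - x, t) / s`
  converges to some `(u, τ)` with `‖u‖ + τ = 1`. Expanding the last inequality to first order shows
  that `u` is critical for the direction `τ k`; expanding to second order compares
  `∇²Λ(u, τ k)²` with `∇²Λ(τ d, τ k)²` (`scaled_limit`). If `τ = 0`, this contradicts SSOSC; so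
  `τ > 0`, the quotient `(X - x) / t` converges to `u / τ`, and `u / τ` minimizes
  `d ↦ ∇²Λ(d, k)²` over strictly critical `d` (`limit_along_ultrafilter`), hence over `K`.
* Conclusion. Up to a constant, `d ↦ ½ ∇²Λ(d, k)²` is the objective of the quadratic program
  (`QPobj_eq`), and SSOSC makes its minimizer over `K` unique (`dirCrit_minimizer_unique`). All
  ultrafilter limits of the difference quotient therefore agree, so it converges (`shapiro_joint`).

SSOSC only provides some multiplier; SMFCQ forces it to be the given one (`multiplier_unique`).
-/

open Filter Topology Set Matrix

attribute [local instance] Classical.propDecidable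

namespace SensNLP

variable {n l me mi : ℕ}
variable (f : (Fin n → ℝ) → (Fin l → ℝ) → ℝ)
  (g : (Fin n → ℝ) → (Fin l → ℝ) → Fin me → ℝ)
  (h : (Fin n → ℝ) → (Fin l → ℝ) → Fin mi → ℝ)
  (p : Fin l → ℝ) (x : Fin n → ℝ) (y : Fin me → ℝ) (z : Fin mi → ℝ)
  (hdir : Fin l → ℝ)

/-- The Lagrangian `L(x,y,z,p) = f(x,p) + yᵀ g(x,p) + zᵀ h(x,p)`. -/
noncomputable def Lag : ℝ :=
  f x p + ∑ i, y i * g x p i + ∑ j, z j * h x p j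

/-- The gradient (with respect to `x`) of a scalar function, as a vector. -/
noncomputable def gradx (φ : (Fin n → ℝ) → ℝ) (x : Fin n → ℝ) : Fin n → ℝ :=
  fun j => fderiv ℝ φ x (Pi.single j 1)

/-- The quadratic form `dᵀ ∇²φ(x) d` of the Hessian of a scalar function. -/
noncomputable def hessQ (φ : (Fin n → ℝ) → ℝ) (x d : Fin n → ℝ) : ℝ :=
  fderiv ℝ (fun x' => fderiv ℝ φ x' d) x d

/-- KKT conditions: stationarity of the Lagrangian in `x`, primal feasibility,
dual feasibility and complementarity. -/
def IsKKT : Prop :=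
  fderiv ℝ (fun x' => Lag f g h p x' y z) x = 0 ∧
  g x p = 0 ∧ h x p ≤ 0 ∧ 0 ≤ z ∧ ∑ j, z j * h x p j = 0

/-- The multiplier set `M_p(x)`. -/
def MultSet : Set ((Fin me → ℝ) × (Fin mi → ℝ)) :=
  {yz | IsKKT f g h p x yz.1 yz.2}

/-- LICQ: linear independence of the gradients of equality and active inequality
constraints. -/
def LICQ : Prop :=
  LinearIndependent ℝ
    (fun i : Fin me ⊕ {j : Fin mi // h x p j = 0} =>
      Sum.elim (fun i => gradx (fun x' => g x' p i) x)
        (fun j => gradx (fun x' => h x' p j.1) x) i)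

/-- MFCQ. -/
def MFCQ : Prop :=
  LinearIndependent ℝ (fun i : Fin me => gradx (fun x' => g x' p i) x) ∧
  ∃ d : Fin n → ℝ,
    (∀ i, fderiv ℝ (fun x' => g x' p i) x d = 0) ∧
    (∀ j, h x p j = 0 → fderiv ℝ (fun x' => h x' p j) x d < 0)

/-- SMFCQ (relative to a multiplier `z`). -/
def SMFCQ : Prop :=
  LinearIndependent ℝ
    (fun i : Fin me ⊕ {j : Fin mi // h x p j = 0 ∧ 0 < z j} =>
      Sum.elim (fun i => gradx (fun x' => g x' p i) x)
        (fun j => gradx (fun x' => h x' p j.1) x) i) ∧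
  ∃ d : Fin n → ℝ,
    (∀ i, fderiv ℝ (fun x' => g x' p i) x d = 0) ∧
    (∀ j, h x p j = 0 → 0 < z j → fderiv ℝ (fun x' => h x' p j) x d = 0) ∧
    (∀ j, h x p j = 0 → z j = 0 → fderiv ℝ (fun x' => h x' p j) x d < 0)

/-- CRCQ at `x` (for parameter `p`): every subfamily of gradients of equality
constraints and active inequality constraints has constant rank near `x`. -/
def CRCQ : Prop :=
  ∃ W ∈ 𝓝 x, ∀ (J : Finset (Fin me)) (I : Finset (Fin mi)),
    (∀ i ∈ I, h x p i = 0) →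
    ∃ r : ℕ, ∀ x' ∈ W,
      Module.finrank ℝ ↥(Submodule.span ℝ
        ((fun i => gradx (fun x'' => g x'' p i) x') '' ↑J ∪
         (fun i => gradx (fun x'' => h x'' p i) x') '' ↑I)) = r

/-- The critical cone `C_p(x)`. -/
def criticalCone : Set (Fin n → ℝ) :=
  {d | fderiv ℝ (fun x' => f x' p) x d ≤ 0 ∧
       (∀ i, fderiv ℝ (fun x' => g x' p i) x d = 0) ∧
       (∀ j, h x p j = 0 → fderiv ℝ (fun x' => h x' p j) x d ≤ 0)}

/-- The set `D_p(x;z)` used in the strong second-order sufficiency condition. -/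
def Dset : Set (Fin n → ℝ) :=
  {d | (∀ i, fderiv ℝ (fun x' => g x' p i) x d = 0) ∧
       (∀ j, h x p j = 0 → 0 < z j → fderiv ℝ (fun x' => h x' p j) x d = 0)}

/-- SOSC. -/
def SOSC : Prop :=
  ∃ yz ∈ MultSet f g h p x, ∀ d ∈ criticalCone f g h p x, d ≠ 0 →
    0 < hessQ (fun x' => Lag f g h p x' yz.1 yz.2) x d

/-- SSOSC. -/
def SSOSC : Prop :=
  ∃ yz ∈ MultSet f g h p x, ∀ d ∈ Dset g h p x yz.2, d ≠ 0 →
    0 < hessQ (fun x' => Lag f g h p x' yz.1 yz.2) x d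

/-- GSSOSC. -/
def GSSOSC : Prop :=
  ∀ yz ∈ MultSet f g h p x, ∀ d ∈ Dset g h p x yz.2, d ≠ 0 →
    0 < hessQ (fun x' => Lag f g h p x' yz.1 yz.2) x d

/-- Strict complementarity slackness: no weakly active constraint. -/
def SCS : Prop :=
  ∀ j, h x p j = 0 → z j ≠ 0

/-- `x` is a local solution (local minimizer) of NLP(p). -/
def IsLocalSol : Prop :=
  g x p = 0 ∧ h x p ≤ 0 ∧
  ∃ W ∈ 𝓝 x, ∀ x' ∈ W, g x' p = 0 → h x' p ≤ 0 → f x p ≤ f x' p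

/-- The directional critical set `K_p(x,z;h)`. -/
def Kset : Set (Fin n → ℝ) :=
  {d | (∀ i, fderiv ℝ (fun x' => g x' p i) x d
          + fderiv ℝ (fun p' => g x p' i) p hdir = 0) ∧
       (∀ j, h x p j = 0 → 0 < z j →
          fderiv ℝ (fun x' => h x' p j) x d
          + fderiv ℝ (fun p' => h x p' j) p hdir = 0) ∧
       (∀ j, h x p j = 0 → z j = 0 →
          fderiv ℝ (fun x' => h x' p j) x d
          + fderiv ℝ (fun p' => h x p' j) p hdir ≤ 0)}

/-- The objective of the sensitivity QP:
`½ dᵀ ∇²ₓₓL d + hᵀ ∇²ₚₓL d`. -/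
noncomputable def QPobj (d : Fin n → ℝ) : ℝ :=
  (1 / 2) * hessQ (fun x' => Lag f g h p x' y z) x d +
    fderiv ℝ (fun p' => fderiv ℝ (fun x'' => Lag f g h p' x'' y z) x d) p hdir

/-- The set `S_p(x;h)` of multipliers maximizing the linear functional
`(y,z) ↦ yᵀ (J_p g) h + zᵀ (J_p h) h` over `M_p(x)`. -/
def Sset : Set ((Fin me → ℝ) × (Fin mi → ℝ)) :=
  {yz ∈ MultSet f g h p x | ∀ yz' ∈ MultSet f g h p x,
    (∑ i, yz'.1 i * fderiv ℝ (fun p' => g x p' i) p hdir) +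
      (∑ j, yz'.2 j * fderiv ℝ (fun p' => h x p' j) p hdir) ≤
    (∑ i, yz.1 i * fderiv ℝ (fun p' => g x p' i) p hdir) +
      (∑ j, yz.2 j * fderiv ℝ (fun p' => h x p' j) p hdir)}

/-- A `PC¹` (piecewise continuously differentiable) function at a point. -/
def PC1At {N' : ℕ} (F : (Fin l → ℝ) → (Fin N' → ℝ)) (p : Fin l → ℝ) : Prop :=
  ∃ N ∈ 𝓝 p, ∃ k : ℕ, ∃ Fs : Fin k → (Fin l → ℝ) → (Fin N' → ℝ),
    ContinuousOn F N ∧ (∀ i, ContDiffOn ℝ 1 (Fs i) N) ∧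
    ∀ q ∈ N, ∃ i, F q = Fs i q

/-- A piecewise linear (continuous selection of finitely many linear maps) function. -/
def IsPiecewiseLinear {N' : ℕ} (D : (Fin l → ℝ) → (Fin N' → ℝ)) : Prop :=
  Continuous D ∧ ∃ k : ℕ, ∃ T : Fin k → (Fin l → ℝ) →ₗ[ℝ] (Fin N' → ℝ),
    ∀ v, ∃ i, D v = T i v

section Analysis

/-! ### Second-order expansions -/

variable {X : Type*} [NormedAddCommGroup X] [NormedSpace ℝ X]

/-- Second-order Taylor expansion with Peano remainder. The remainder has derivative `o(‖δ‖)` by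
the symmetry of the second derivative, so the mean value inequality bounds it by `o(‖δ‖ ^ 2)`. -/
theorem taylor_two_isLittleO {F : X → ℝ} (hF : ContDiff ℝ 2 F) (q : X) :
    (fun δ : X => F (q + δ) - F q - fderiv ℝ F q δ - (1 / 2) * fderiv ℝ (fderiv ℝ F) q δ δ)
      =o[𝓝 0] fun δ => ‖δ‖ ^ 2 := by
  have hd : Differentiable ℝ F := hF.differentiable (by norm_num)
  have hd2 : HasFDerivAt (fderiv ℝ F) (fderiv ℝ (fderiv ℝ F) q) q :=
    ((hF.fderiv_right (m := 1) (by norm_num)).differentiable (by norm_num) q).hasFDerivAt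
  have hsymm : IsSymmSndFDerivAt ℝ F q := hF.contDiffAt.isSymmSndFDerivAt (by simp)
  rw [Asymptotics.isLittleO_iff]
  intro ε hε
  have h1 := (hasFDerivAt_iff_isLittleO_nhds_zero.1 hd2).def hε
  obtain ⟨r, hr, hb⟩ := Metric.eventually_nhds_iff_ball.1 h1
  filter_upwards [Metric.ball_mem_nhds (0 : X) hr] with δ hδ
  have hder : ∀ η ∈ Metric.closedBall (0 : X) ‖δ‖, HasFDerivWithinAt
      (fun η : X => F (q + η) - F q - fderiv ℝ F q η - (1 / 2) * fderiv ℝ (fderiv ℝ F) q η η)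
      (fderiv ℝ F (q + η) - fderiv ℝ F q - fderiv ℝ (fderiv ℝ F) q η)
      (Metric.closedBall (0 : X) ‖δ‖) η := by
    intro η _
    have e1 : HasFDerivAt (fun η : X => F (q + η)) (fderiv ℝ F (q + η)) η := by
      exact ((hd (q + η)).hasFDerivAt).comp η ((hasFDerivAt_id η).const_add q)
    have e2 := (fderiv ℝ F q).hasFDerivAt (x := η)
    have e3 := ((fderiv ℝ (fderiv ℝ F) q).hasFDerivAt (x := η)).clm_apply (hasFDerivAt_id η)
    refine ((((e1.sub_const (F q)).sub e2).sub (e3.const_mul (1 / 2))).congr_fderiv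
      ?_).hasFDerivWithinAt
    ext v
    have := hsymm v η
    simp at this ⊢
    rw [this]; ring
  have hbd : ∀ η ∈ Metric.closedBall (0 : X) ‖δ‖,
      ‖fderiv ℝ F (q + η) - fderiv ℝ F q - fderiv ℝ (fderiv ℝ F) q η‖ ≤ ε * ‖δ‖ := by
    intro η hη
    have hη' : ‖η‖ ≤ ‖δ‖ := by simpa using hη
    have hδ' : ‖δ‖ < r := by simpa using hδ
    exact (hb η (by simpa using hη'.trans_lt hδ')).trans (by gcongr)
  have := (convex_closedBall (0 : X) ‖δ‖).norm_image_sub_le_of_norm_hasFDerivWithin_le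
    hder hbd (x := 0) (y := δ) (by simp) (by simp)
  simp only [add_zero, sub_self, map_zero, sub_zero, mul_zero] at this
  rw [norm_pow, norm_norm, pow_two, ← mul_assoc]
  exact this

/-- If `δ / s → w` with `s → 0`, the first-order Taylor remainder of `F` at `q`, divided by `s ^ 2`,
tends to `½ F''(q)(w, w)`. -/
theorem tendsto_taylor_two {F : X → ℝ} (hF : ContDiff ℝ 2 F) (q : X) {α : Type*}
    {l : Filter α} {s : α → ℝ} {δ : α → X} {w : X} (hs : Tendsto s l (𝓝 0))
    (hs0 : ∀ᶠ a in l, s a ≠ 0) (hδ : Tendsto (fun a => (s a)⁻¹ • δ a) l (𝓝 w)) :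
    Tendsto (fun a => ((s a) ^ 2)⁻¹ * (F (q + δ a) - F q - fderiv ℝ F q (δ a))) l
      (𝓝 ((1 / 2) * fderiv ℝ (fderiv ℝ F) q w w)) := by
  have hδ0 : Tendsto δ l (𝓝 0) := by
    have := hs.smul hδ
    rw [zero_smul] at this
    refine this.congr' ?_
    filter_upwards [hs0] with a ha
    rw [smul_smul, mul_inv_cancel₀ ha, one_smul]
  have h1 := (taylor_two_isLittleO hF q).comp_tendsto hδ0
  have hO : (fun a => ‖δ a‖ ^ 2) =O[l] fun a => (s a) ^ 2 := by
    have hb : (fun a => s a • (s a)⁻¹ • δ a) =O[l] fun a => s a • (1 : ℝ) :=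
      (Asymptotics.isBigO_refl s l).smul (hδ.isBigO_one ℝ)
    have hb' : δ =O[l] s := by
      refine hb.congr' ?_ (by simp)
      filter_upwards [hs0] with a ha
      rw [smul_smul, mul_inv_cancel₀ ha, one_smul]
    exact hb'.norm_left.pow 2
  have h2 := (h1.trans_isBigO hO).tendsto_div_nhds_zero
  have h3 : Tendsto (fun a => (1 / 2) * fderiv ℝ (fderiv ℝ F) q ((s a)⁻¹ • δ a) ((s a)⁻¹ • δ a)) l
      (𝓝 ((1 / 2) * fderiv ℝ (fderiv ℝ F) q w w)) := by
    have hc : Continuous fun v : X => (1 / 2) * fderiv ℝ (fderiv ℝ F) q v v := by fun_prop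
    exact (hc.tendsto w).comp hδ
  have h4 := h2.add h3
  rw [zero_add] at h4
  refine h4.congr' ?_
  filter_upwards [hs0] with a ha
  simp only [Function.comp_apply, map_smul, _root_.smul_apply, smul_eq_mul]
  field_simp
  ring

/-- The first-order counterpart of `tendsto_taylor_two`. -/
theorem tendsto_difference_quotient {F : X → ℝ} {F' : X →L[ℝ] ℝ} {q : X}
    (hF : HasFDerivAt F F' q) {α : Type*}
    {l : Filter α} {s : α → ℝ} {δ : α → X} {w : X} (hs : Tendsto s l (𝓝 0))
    (hs0 : ∀ᶠ a in l, s a ≠ 0) (hδ : Tendsto (fun a => (s a)⁻¹ • δ a) l (𝓝 w)) :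
    Tendsto (fun a => (s a)⁻¹ * (F (q + δ a) - F q)) l (𝓝 (F' w)) := by
  have hδ0 : Tendsto δ l (𝓝 0) := by
    have := hs.smul hδ
    rw [zero_smul] at this
    refine this.congr' ?_
    filter_upwards [hs0] with a ha
    rw [smul_smul, mul_inv_cancel₀ ha, one_smul]
  exact (hF.hasFDerivWithinAt (s := univ)).lim hδ0 (by simp) hδ

end Analysis

section Curve

/-! ### Curves in the zero set of a submersion -/

variable {E P : Type*} [NormedAddCommGroup E] [NormedSpace ℝ E]
  [NormedAddCommGroup P] [NormedSpace ℝ P]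

/-- If `Φ(x, p) = 0`, the partial derivative of `Φ` in `x` is onto and `Φ'(d, k) = 0`, then for
small `t > 0` the zero set of `Φ` over `p + t k` contains a point `c(t) = x + t d + o(t)`.
With a right inverse `R` of the partial derivative, `(v, t) ↦ (Φ(x + t d + R v, p + t k), t)` has
derivative `id` at `0`, and the curve comes from its local inverse on the axis `v = 0`. -/
theorem exists_curve {ι : Type*} [Fintype ι] {Φ : E × P → ι → ℝ} {Φ' : E × P →L[ℝ] ι → ℝ}
    {x d : E} {p k : P} (hΦ : HasStrictFDerivAt Φ Φ' (x, p)) (h0 : Φ (x, p) = 0)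
    (hsurj : Function.Surjective fun v : E => Φ' (v, 0)) (hd : Φ' (d, k) = 0) :
    ∃ c : ℝ → E, Tendsto (fun t : ℝ => t⁻¹ • (c t - x)) (𝓝[>] 0) (𝓝 d) ∧
      ∀ᶠ t in 𝓝[>] (0 : ℝ), Φ (c t, p + t • k) = 0 := by
  obtain ⟨R₀, hR₀⟩ := LinearMap.exists_rightInverse_of_surjective
    ((Φ' : E × P →ₗ[ℝ] ι → ℝ) ∘ₗ LinearMap.inl ℝ E P) (LinearMap.range_eq_top.2 (by
      intro v; obtain ⟨w, hw⟩ := hsurj v; exact ⟨w, by simpa using hw⟩))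
  set R : (ι → ℝ) →L[ℝ] E := LinearMap.toContinuousLinearMap R₀ with hRdef
  have hR : ∀ v, Φ' (R v, 0) = v := fun v => by
    simpa [hRdef] using congrArg (fun T => T v) hR₀
  -- `B (v, t) = (t d + R v, t k)`
  let B : (ι → ℝ) × ℝ →L[ℝ] E × P :=
    ((ContinuousLinearMap.snd ℝ (ι → ℝ) ℝ).smulRight d +
      R.comp (ContinuousLinearMap.fst ℝ (ι → ℝ) ℝ)).prod
      ((ContinuousLinearMap.snd ℝ (ι → ℝ) ℝ).smulRight k)
  have hB : ∀ w, B w = (w.2 • d + R w.1, w.2 • k) := fun w => rfl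
  let Ψ : (ι → ℝ) × ℝ → (ι → ℝ) × ℝ := fun w => (Φ ((x, p) + B w), w.2)
  have hΦB : Φ'.comp B = ContinuousLinearMap.fst ℝ (ι → ℝ) ℝ := by
    refine ContinuousLinearMap.ext fun w => ?_
    have : B w = w.2 • (d, k) + (R w.1, 0) := by rw [hB]; simp
    rw [ContinuousLinearMap.comp_apply, this, map_add, map_smul, hd, hR]
    simp
  have hΨ : HasStrictFDerivAt Ψ
      ((ContinuousLinearEquiv.refl ℝ ((ι → ℝ) × ℝ) :
        ((ι → ℝ) × ℝ) ≃L[ℝ] ((ι → ℝ) × ℝ)) : ((ι → ℝ) × ℝ) →L[ℝ] ((ι → ℝ) × ℝ)) 0 := by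
    have hΦ' : HasStrictFDerivAt Φ Φ' ((x, p) + B 0) := by simpa using hΦ
    have e1 : HasStrictFDerivAt (fun w => Φ ((x, p) + B w)) (Φ'.comp B) 0 :=
      hΦ'.comp (0 : (ι → ℝ) × ℝ) (B.hasStrictFDerivAt.const_add (x, p))
    rw [hΦB] at e1
    exact (e1.prodMk hasStrictFDerivAt_snd).congr_fderiv (by ext <;> simp)
  have hΨ0 : Ψ 0 = 0 := by simp [Ψ, h0]
  have hinv := hΨ.eventually_right_inverse
  have hder := hΨ.to_localInverse.hasFDerivAt
  have hinv0 := hΨ.localInverse_apply_image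
  set G := hΨ.localInverse Ψ _ 0 with hG
  rw [hΨ0] at hinv hder hinv0
  refine ⟨fun t => x + (t • d + R (G (0, t)).1), ?_, ?_⟩
  · have e2 : Tendsto (fun t : ℝ => t⁻¹ • (G (0 + (0, t)) - G 0)) (𝓝[>] 0)
        (𝓝 ((0 : ι → ℝ), (1 : ℝ))) := by
      have := (hder.hasFDerivWithinAt (s := univ)).lim (l := 𝓝[>] (0 : ℝ))
        (d := fun t : ℝ => ((0 : ι → ℝ), t)) (c := fun t => t⁻¹) (v := (0, 1)) ?_ (by simp) ?_
      · simpa using this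
      · refine tendsto_nhdsWithin_of_tendsto_nhds ?_
        exact Continuous.tendsto' (by fun_prop) _ _ rfl
      · refine tendsto_const_nhds.congr' ?_
        filter_upwards [self_mem_nhdsWithin] with t ht
        have : t ≠ 0 := (ne_of_gt ht)
        simp [this]
    have e3 : Tendsto (fun t : ℝ => d + R (t⁻¹ • (G (0 + (0, t)) - G 0)).1) (𝓝[>] 0) (𝓝 d) := by
      have hc : Continuous fun w : (ι → ℝ) × ℝ => d + R w.1 := by fun_prop
      have h1 := (hc.tendsto _).comp e2
      rwa [map_zero, add_zero] at h1
    refine e3.congr' ?_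
    filter_upwards [self_mem_nhdsWithin] with t ht
    have : t ≠ 0 := (ne_of_gt ht)
    rw [hinv0]
    simp [this, smul_smul]
  · have hline : Tendsto (fun t : ℝ => ((0 : ι → ℝ), t)) (𝓝[>] 0) (𝓝 0) :=
      tendsto_nhdsWithin_of_tendsto_nhds (Continuous.tendsto' (by fun_prop) _ _ rfl)
    filter_upwards [hline.eventually hinv] with t ht
    have h2 : (G (0, t)).2 = t := congrArg Prod.snd ht
    have h1 : Φ ((x, p) + B (G (0, t))) = 0 := congrArg Prod.fst ht
    rw [hB, h2] at h1
    simpa using h1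

/-- Finitely many functionals on `ℝᴺ` with linearly independent coordinate vectors are jointly
onto: row rank equals column rank. -/
theorem surjective_of_linearIndependent {ι N : Type*} [Fintype ι] [Fintype N] [DecidableEq N]
    (A : ι → (N → ℝ) →L[ℝ] ℝ)
    (hA : LinearIndependent ℝ fun i => fun j => A i (Pi.single j 1)) :
    Function.Surjective fun v : N → ℝ => fun i => A i v := by
  let T : (N → ℝ) →ₗ[ℝ] (ι → ℝ) := LinearMap.pi fun i => (A i : (N → ℝ) →ₗ[ℝ] ℝ)
  suffices h : LinearMap.range T = ⊤ by
    intro v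
    obtain ⟨w, hw⟩ := LinearMap.range_eq_top.1 h v
    exact ⟨w, hw⟩
  -- a functional `c ≠ 0` vanishing on the range of `T` is a linear dependence of the rows
  by_contra hne
  obtain ⟨c, hc0, hc⟩ := Submodule.exists_le_ker_of_lt_top _ (lt_top_iff_ne_top.2 hne)
  apply hc0
  have key : ∀ i, c (Pi.single i 1) = 0 := by
    refine Fintype.linearIndependent_iff.1 hA (fun i => c (Pi.single i 1)) ?_
    ext j
    have h1 : c (T (Pi.single j 1)) = 0 := hc (LinearMap.mem_range_self _ _)
    rw [LinearMap.pi_apply_eq_sum_univ c] at h1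
    have h2 : ∀ i : ι, (Pi.single i 1 : ι → ℝ) = fun j => if i = j then 1 else 0 := fun i => by
      ext j; simp [Pi.single_apply, eq_comm]
    simpa [T, mul_comm, h2] using h1
  refine LinearMap.pi_ext' fun i => LinearMap.ext_ring ?_
  simpa using key i

end Curve

section Core

/-! ### Feasible points, critical directions and the solution map along a ray -/

variable {E P ιe ιi : Type*} [NormedAddCommGroup E] [NormedSpace ℝ E]
  [NormedAddCommGroup P] [NormedSpace ℝ P]

/-- Feasibility of `q = (x, p)` for the constraints `G = 0`, `H ≤ 0`. -/
def Feas (G : ιe → E × P → ℝ) (H : ιi → E × P → ℝ) (q : E × P) : Prop :=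
  (∀ i, G i q = 0) ∧ ∀ j, H j q ≤ 0

/-- `x` is a local minimizer of `F (·, p)` over the feasible set. -/
def LocSol (F : E × P → ℝ) (G : ιe → E × P → ℝ) (H : ιi → E × P → ℝ) (p : P) (x : E) : Prop :=
  Feas G H (x, p) ∧ ∃ W ∈ 𝓝 x, ∀ w ∈ W, Feas G H (w, p) → F (x, p) ≤ F (w, p)

/-- The directional critical set `K_p(x,z;k)` at `q = (x, p)`, in terms of the joint derivatives
in `(x, p)`. -/
def DirCrit (G : ιe → E × P → ℝ) (H : ιi → E × P → ℝ) (z : ιi → ℝ) (q : E × P) (k : P) :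
    Set E :=
  {d | (∀ i, fderiv ℝ (G i) q (d, k) = 0) ∧
    (∀ j, H j q = 0 → 0 < z j → fderiv ℝ (H j) q (d, k) = 0) ∧
    (∀ j, H j q = 0 → z j = 0 → fderiv ℝ (H j) q (d, k) ≤ 0)}

/-- The part of `DirCrit` on which the linearized weakly active constraints are strict. -/
def StrictDirCrit (G : ιe → E × P → ℝ) (H : ιi → E × P → ℝ) (z : ιi → ℝ) (q : E × P) (k : P) :
    Set E :=
  {d | (∀ i, fderiv ℝ (G i) q (d, k) = 0) ∧
    (∀ j, H j q = 0 → 0 < z j → fderiv ℝ (H j) q (d, k) = 0) ∧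
    (∀ j, H j q = 0 → z j = 0 → fderiv ℝ (H j) q (d, k) < 0)}

variable {F Λ : E × P → ℝ} {G : ιe → E × P → ℝ} {H : ιi → E × P → ℝ} {z : ιi → ℝ}
  {x : E} {p k : P}

theorem ray_tendsto (p k : P) : Tendsto (fun t : ℝ => p + t • k) (𝓝[>] 0) (𝓝 p) :=
  tendsto_nhdsWithin_of_tendsto_nhds (Continuous.tendsto' (by fun_prop) _ _ (by simp))

theorem tendsto_of_difference_quotient {c : ℝ → E} {d : E}
    (hc : Tendsto (fun t : ℝ => t⁻¹ • (c t - x)) (𝓝[>] 0) (𝓝 d)) :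
    Tendsto c (𝓝[>] 0) (𝓝 x) := by
  have ht : Tendsto (fun t : ℝ => t) (𝓝[>] 0) (𝓝 0) :=
    tendsto_nhdsWithin_of_tendsto_nhds tendsto_id
  have h1 := (ht.smul hc).const_add x
  rw [zero_smul, add_zero] at h1
  refine h1.congr' ?_
  filter_upwards [self_mem_nhdsWithin] with t (ht : 0 < t)
  rw [smul_smul, mul_inv_cancel₀ ht.ne', one_smul, add_sub_cancel]

/-- If some feasible curve over the ray `p + t k` starts at `x`, then `xmap (p + t k) → x` as
`t ↓ 0`, and for small `t` the point `xmap (p + t k)` minimizes over all feasible points of a ball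
around `x` that does not depend on `t`.
By compactness a minimizer over the feasible part of the ball exists; every limit point of these
minimizers is a local solution at `p` near `x`, so it is `x`. Eventually the minimizers are thus
interior to the ball, hence local solutions, and local uniqueness identifies them with `xmap`. -/
theorem minimizer_on_ray [FiniteDimensional ℝ E] (hF : Continuous F) (hG : ∀ i, Continuous (G i))
    (hH : ∀ j, Continuous (H j)) {U : Set P} (hU : U ∈ 𝓝 p) {xmap : P → E} (hx0 : xmap p = x)
    (hsol : ∀ p' ∈ U, LocSol F G H p' (xmap p'))
    (huniq : ∃ V ∈ 𝓝 x, ∀ p' ∈ U, ∀ x' ∈ V, LocSol F G H p' x' → x' = xmap p')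
    {c : ℝ → E} (hc : Tendsto c (𝓝[>] 0) (𝓝 x))
    (hcf : ∀ᶠ t in 𝓝[>] (0 : ℝ), Feas G H (c t, p + t • k)) :
    Tendsto (fun t : ℝ => xmap (p + t • k)) (𝓝[>] 0) (𝓝 x) ∧
      ∃ r > 0, ∀ᶠ t in 𝓝[>] (0 : ℝ), ∀ x' ∈ Metric.closedBall x r, Feas G H (x', p + t • k) →
        F (xmap (p + t • k), p + t • k) ≤ F (x', p + t • k) := by
  have hpU : p ∈ U := mem_of_mem_nhds hU
  obtain ⟨V, hV, hVu⟩ := huniq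
  obtain ⟨hxf, W, hW, hWmin⟩ := hx0 ▸ hsol p hpU
  obtain ⟨r, hr, hrs⟩ := Metric.nhds_basis_closedBall.mem_iff.1
    (inter_mem hV (interior_mem_nhds.2 hW))
  have hproper : ProperSpace E := FiniteDimensional.proper ℝ E
  -- a feasible point of the ball with the optimal value is itself a local solution
  have hstrict : ∀ a ∈ Metric.closedBall x r, Feas G H (a, p) → F (a, p) ≤ F (x, p) → a = x := by
    intro a ha haf hle
    rw [← hx0]
    refine hVu p hpU a (hrs ha).1 ⟨haf, W, mem_interior_iff_mem_nhds.1 (hrs ha).2, ?_⟩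
    intro x' hx' hf'
    exact hle.trans (hWmin x' hx' hf')
  have hclosed : ∀ p', IsCompact (Metric.closedBall x r ∩ {x' | Feas G H (x', p')}) := by
    intro p'
    refine (isCompact_closedBall x r).inter_right ?_
    have : {x' | Feas G H (x', p')} = (⋂ i, {x' | G i (x', p') = 0}) ∩
        ⋂ j, {x' | H j (x', p') ≤ 0} := by ext; simp [Feas]
    rw [this]
    refine (isClosed_iInter fun i => ?_).inter (isClosed_iInter fun j => ?_)
    · exact isClosed_eq (by have := hG i; fun_prop) continuous_const
    · exact isClosed_le (by have := hH j; fun_prop) continuous_const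
  have hcb : ∀ᶠ t in 𝓝[>] (0 : ℝ), c t ∈ Metric.closedBall x r :=
    hc (Metric.closedBall_mem_nhds x hr)
  have hex : ∀ᶠ t in 𝓝[>] (0 : ℝ), ∃ a, a ∈ Metric.closedBall x r ∧ Feas G H (a, p + t • k) ∧
      ∀ x' ∈ Metric.closedBall x r, Feas G H (x', p + t • k) →
        F (a, p + t • k) ≤ F (x', p + t • k) := by
    filter_upwards [hcb, hcf] with t h1 h2
    obtain ⟨a, ⟨ha1, ha2⟩, ham⟩ := (hclosed (p + t • k)).exists_isMinOn ⟨c t, h1, h2⟩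
      (f := fun x' => F (x', p + t • k)) (by fun_prop)
    exact ⟨a, ha1, ha2, fun x' h3 h4 => ham ⟨h3, h4⟩⟩
  obtain ⟨m, hm⟩ := hex.choice
  have hmx : Tendsto m (𝓝[>] 0) (𝓝 x) := by
    rw [tendsto_iff_ultrafilter]
    intro 𝒰 h𝒰
    have hm' := h𝒰 hm
    have hmem : Metric.closedBall x r ∈ 𝒰.map m :=
      Ultrafilter.mem_map.2 (mem_of_superset hm' fun t ht => ht.1)
    obtain ⟨a, ha, hma⟩ := isCompact_iff_ultrafilter_le_nhds'.1 (isCompact_closedBall x r) _ hmem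
    have hma : Tendsto m 𝒰 (𝓝 a) := hma
    have hpt : Tendsto (fun t : ℝ => p + t • k) 𝒰 (𝓝 p) := (ray_tendsto p k).mono_left h𝒰
    have hq : Tendsto (fun t : ℝ => (m t, p + t • k)) 𝒰 (𝓝 (a, p)) := hma.prodMk_nhds hpt
    have hqc : Tendsto (fun t : ℝ => (c t, p + t • k)) 𝒰 (𝓝 (x, p)) :=
      (hc.mono_left h𝒰).prodMk_nhds hpt
    suffices a = x from this ▸ hma
    refine hstrict a ha ⟨fun i => ?_, fun j => ?_⟩ ?_
    · refine tendsto_nhds_unique (((hG i).tendsto _).comp hq) (tendsto_const_nhds.congr' ?_)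
      filter_upwards [hm'] with t ht using (ht.2.1.1 i).symm
    · refine le_of_tendsto (((hH j).tendsto _).comp hq) ?_
      filter_upwards [hm'] with t ht using ht.2.1.2 j
    · refine le_of_tendsto_of_tendsto ((hF.tendsto _).comp hq) ((hF.tendsto _).comp hqc) ?_
      filter_upwards [hm', h𝒰 hcb, h𝒰 hcf] with t ht h1 h2 using ht.2.2 _ h1 h2
  have hmeq : ∀ᶠ t in 𝓝[>] (0 : ℝ), m t = xmap (p + t • k) := by
    filter_upwards [hm, hmx (Metric.ball_mem_nhds x hr), ray_tendsto p k hU] with t h1 h2 h3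
    refine hVu _ h3 _ (hrs h1.1).1 ⟨h1.2.1, Metric.closedBall x r, ?_, h1.2.2⟩
    exact mem_of_superset (Metric.isOpen_ball.mem_nhds h2) Metric.ball_subset_closedBall
  refine ⟨hmx.congr' hmeq, r, hr, ?_⟩
  filter_upwards [hm, hmeq] with t h1 h2
  rw [← h2]
  exact h1.2.2

/-- Every strictly critical direction is tangent to a feasible curve along which complementarity
with `z` is preserved. The equality and strongly active constraints are kept at zero; weakly active
ones decrease because of the strict inequality, inactive ones stay inactive by continuity. -/
theorem feasible_curve [FiniteDimensional ℝ E] [Fintype ιe] [Fintype ιi]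
    (hG : ∀ i, ContDiff ℝ 2 (G i))
    (hH : ∀ j, ContDiff ℝ 2 (H j)) (hfeas : Feas G H (x, p)) (hz : ∀ j, 0 ≤ z j)
    (hcompl : ∀ j, z j * H j (x, p) = 0)
    (hsurj : Function.Surjective fun v : E =>
      fun i : ιe ⊕ {j : ιi // H j (x, p) = 0 ∧ 0 < z j} =>
        fderiv ℝ (Sum.elim G (fun j => H j.1) i) (x, p) (v, 0))
    {d : E} (hd : d ∈ StrictDirCrit G H z (x, p) k) :
    ∃ c : ℝ → E, Tendsto (fun t : ℝ => t⁻¹ • (c t - x)) (𝓝[>] 0) (𝓝 d) ∧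
      ∀ᶠ t in 𝓝[>] (0 : ℝ), Feas G H (c t, p + t • k) ∧ ∀ j, z j * H j (c t, p + t • k) = 0 := by
  obtain ⟨hd1, hd2, hd3⟩ := hd
  have hΦ : HasStrictFDerivAt (fun q => fun i : ιe ⊕ {j : ιi // H j (x, p) = 0 ∧ 0 < z j} =>
      Sum.elim G (fun j => H j.1) i q) (ContinuousLinearMap.pi fun i =>
        fderiv ℝ (Sum.elim G (fun j => H j.1) i) (x, p)) (x, p) := by
    refine hasStrictFDerivAt_pi.2 ?_
    rintro (i | j)
    · exact (hG i).contDiffAt.hasStrictFDerivAt (by norm_num)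
    · exact (hH j).contDiffAt.hasStrictFDerivAt (by norm_num)
  obtain ⟨c, hc, hc0⟩ := exists_curve (d := d) (k := k) hΦ
    (by ext i; rcases i with i | j; exacts [hfeas.1 i, j.2.1]) hsurj
    (by ext i; rcases i with i | j; exacts [hd1 i, hd2 j j.2.1 j.2.2])
  have hq : Tendsto (fun t : ℝ => (c t, p + t • k)) (𝓝[>] 0) (𝓝 (x, p)) :=
    (tendsto_of_difference_quotient hc).prodMk_nhds (ray_tendsto p k)
  -- inequality `j` is weakly active, strongly active or inactive, in this order
  have hineq : ∀ j, ∀ᶠ t in 𝓝[>] (0 : ℝ),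
      H j (c t, p + t • k) ≤ 0 ∧ z j * H j (c t, p + t • k) = 0 := by
    intro j
    by_cases ha : H j (x, p) = 0
    · rcases (hz j).eq_or_lt with hzj | hzj
      · have h1 : Tendsto (fun t : ℝ => t⁻¹ • (c t - x, t • k)) (𝓝[>] 0) (𝓝 (d, k)) := by
          refine (hc.prodMk_nhds (tendsto_const_nhds (x := k))).congr' ?_
          filter_upwards [self_mem_nhdsWithin] with t (ht : 0 < t)
          simp [smul_smul, ht.ne']
        have h2 := tendsto_difference_quotient
          ((hH j).differentiable (by norm_num) (x, p)).hasFDerivAt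
          (tendsto_nhdsWithin_of_tendsto_nhds tendsto_id)
          (by filter_upwards [self_mem_nhdsWithin] with t (ht : 0 < t) using ht.ne') h1
        filter_upwards [h2.eventually_lt_const (hd3 j ha hzj.symm), self_mem_nhdsWithin] with t h3
          (ht : 0 < t)
        simp only [Prod.mk_add_mk, add_sub_cancel, ha, sub_zero] at h3
        refine ⟨?_, by rw [← hzj, zero_mul]⟩
        by_contra hcon
        exact absurd h3 (not_lt.2 (mul_nonneg (inv_nonneg.2 ht.le) (not_le.1 hcon).le))
      · filter_upwards [hc0] with t ht
        have : H j (c t, p + t • k) = 0 := congrFun ht (Sum.inr ⟨j, ha, hzj⟩)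
        simp [this]
    · have hz0 : z j = 0 := (mul_eq_zero.1 (hcompl j)).resolve_right ha
      have hlt : H j (x, p) < 0 := lt_of_le_of_ne (hfeas.2 j) ha
      filter_upwards [((hH j).continuous.tendsto _).comp hq |>.eventually_lt_const hlt] with t ht
      exact ⟨ht.le, by rw [hz0, zero_mul]⟩
  refine ⟨c, hc, ?_⟩
  filter_upwards [hc0, eventually_all.2 hineq] with t h1 h2
  exact ⟨⟨fun i => congrFun h1 (Sum.inl i), fun j => (h2 j).1⟩, fun j => (h2 j).2⟩

/-- Passage to the limit in `Λ(X) - ∑ z_j H_j(X) ≤ Λ(c)`, where `c(t) = x + t d + o(t)` and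
`(X - x, t) / s → (u, τ)`. As `Λ` is stationary in `x`, the first-order terms give
`0 ≤ ∑ z_j H_j'(u, τ k)`; all summands are `≤ 0`, so they vanish and `u` is critical for `τ k`. The
second-order terms give the comparison of the values of the quadratic form `∇²Λ`. -/
theorem scaled_limit [Fintype ιi] (hΛ : ContDiff ℝ 2 Λ) (hG : ∀ i, ContDiff ℝ 2 (G i))
    (hH : ∀ j, ContDiff ℝ 2 (H j)) (hfeas : Feas G H (x, p)) (hz : ∀ j, 0 ≤ z j)
    (hcompl : ∀ j, z j * H j (x, p) = 0) (hstat : ∀ v : E, fderiv ℝ Λ (x, p) (v, 0) = 0)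
    {l : Filter ℝ} [l.NeBot] (hl : l ≤ 𝓝[>] 0) {X c : ℝ → E} {d : E}
    (hXf : ∀ᶠ t in l, Feas G H (X t, p + t • k))
    (hc : Tendsto (fun t : ℝ => t⁻¹ • (c t - x)) (𝓝[>] 0) (𝓝 d))
    (hle : ∀ᶠ t in l, Λ (X t, p + t • k) - ∑ j, z j * H j (X t, p + t • k) ≤ Λ (c t, p + t • k))
    {s : ℝ → ℝ} (hs : Tendsto s l (𝓝 0)) (hs0 : ∀ᶠ t in l, 0 < s t) {u : E} {τ : ℝ}
    (hu : Tendsto (fun t => (s t)⁻¹ • (X t - x)) l (𝓝 u))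
    (hτ : Tendsto (fun t => (s t)⁻¹ * t) l (𝓝 τ)) :
    u ∈ DirCrit G H z (x, p) (τ • k) ∧
      fderiv ℝ (fderiv ℝ Λ) (x, p) (u, τ • k) (u, τ • k) ≤
        fderiv ℝ (fderiv ℝ Λ) (x, p) (τ • (d, k)) (τ • (d, k)) := by
  have hs1 : ∀ᶠ t in l, s t ≠ 0 := hs0.mono fun t ht => ht.ne'
  have hk : Tendsto (fun t : ℝ => (s t)⁻¹ • t • k) l (𝓝 (τ • k)) := by
    simpa [smul_smul] using hτ.smul_const k
  have h1 : Tendsto (fun t : ℝ => (s t)⁻¹ • (X t - x, t • k)) l (𝓝 (u, τ • k)) :=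
    hu.prodMk_nhds hk
  have h2 : Tendsto (fun t : ℝ => (s t)⁻¹ • (c t - x, t • k)) l (𝓝 (τ • (d, k))) := by
    have h3 : Tendsto (fun t => (s t)⁻¹ • (c t - x)) l (𝓝 (τ • d)) := by
      refine (hτ.smul (hc.mono_left hl)).congr' ?_
      filter_upwards [hl self_mem_nhdsWithin] with t (ht : 0 < t)
      rw [smul_smul, mul_assoc, mul_inv_cancel₀ ht.ne', mul_one]
    exact h3.prodMk_nhds hk
  have hGd : ∀ i, HasFDerivAt (G i) (fderiv ℝ (G i) (x, p)) (x, p) := fun i =>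
    ((hG i).differentiable (by norm_num) _).hasFDerivAt
  have hHd : ∀ j, HasFDerivAt (H j) (fderiv ℝ (H j) (x, p)) (x, p) := fun j =>
    ((hH j).differentiable (by norm_num) _).hasFDerivAt
  have hΛd : HasFDerivAt Λ (fderiv ℝ Λ (x, p)) (x, p) :=
    (hΛ.differentiable (by norm_num) _).hasFDerivAt
  have hHlim := fun j => tendsto_difference_quotient (hHd j) hs hs1 h1
  simp only [Prod.mk_add_mk, add_sub_cancel] at hHlim
  have hHle : ∀ j, H j (x, p) = 0 → fderiv ℝ (H j) (x, p) (u, τ • k) ≤ 0 := by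
    intro j hj
    refine le_of_tendsto (hHlim j) ?_
    filter_upwards [hXf, hs0] with t h4 h5
    rw [hj, sub_zero]
    exact mul_nonpos_of_nonneg_of_nonpos (inv_nonneg.2 h5.le) (h4.2 j)
  -- `Λ'(x,p)` does not see the `x`-component
  have hΛ' : ∀ (v : E) (k' : P), fderiv ℝ Λ (x, p) (v, k') = fderiv ℝ Λ (x, p) (0, k') := by
    intro v k'
    have : ((v, k') : E × P) = (v, 0) + (0, k') := by simp
    rw [this, map_add, hstat, zero_add]
  have hsum : 0 ≤ ∑ j, z j * fderiv ℝ (H j) (x, p) (u, τ • k) := by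
    have h3 := (tendsto_difference_quotient hΛd hs hs1 h1).sub
      (tendsto_difference_quotient hΛd hs hs1 h2)
    simp only [Prod.mk_add_mk, add_sub_cancel, Prod.smul_mk, hΛ' u, hΛ' (τ • d), sub_self] at h3
    have h4 : Tendsto (fun t => ∑ j, z j * ((s t)⁻¹ * (H j (X t, p + t • k) - H j (x, p)))) l
        (𝓝 (∑ j, z j * fderiv ℝ (H j) (x, p) (u, τ • k))) :=
      tendsto_finsetSum _ fun j _ => (hHlim j).const_mul (z j)
    refine le_of_tendsto_of_tendsto h3 h4 ?_
    filter_upwards [hle, hs0] with t h5 h6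
    have h7 : ∑ j, z j * ((s t)⁻¹ * (H j (X t, p + t • k) - H j (x, p))) =
        (s t)⁻¹ * ∑ j, z j * H j (X t, p + t • k) := by
      rw [Finset.mul_sum]
      refine Finset.sum_congr rfl fun j _ => ?_
      linear_combination (-(s t)⁻¹) * hcompl j
    have h8 := mul_le_mul_of_nonneg_left h5 (inv_nonneg.2 h6.le)
    rw [h7]
    linarith
  have hterm : ∀ j, z j * fderiv ℝ (H j) (x, p) (u, τ • k) ≤ 0 := by
    intro j
    rcases mul_eq_zero.1 (hcompl j) with h | h
    · simp [h]
    · exact mul_nonpos_of_nonneg_of_nonpos (hz j) (hHle j h)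
  have hzero := (Finset.sum_eq_zero_iff_of_nonpos fun j _ => hterm j).1
    (le_antisymm (Finset.sum_nonpos fun j _ => hterm j) hsum)
  refine ⟨⟨fun i => ?_, fun j _ hj => ?_, fun j hj _ => hHle j hj⟩, ?_⟩
  · have h3 := tendsto_difference_quotient (hGd i) hs hs1 h1
    simp only [Prod.mk_add_mk, add_sub_cancel] at h3
    refine tendsto_nhds_unique h3 (tendsto_const_nhds.congr' ?_)
    filter_upwards [hXf] with t ht
    rw [ht.1 i, hfeas.1 i, sub_self, mul_zero]
  · exact (mul_eq_zero.1 (hzero j (Finset.mem_univ j))).resolve_left hj.ne'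
  · have h3 := le_of_tendsto_of_tendsto (tendsto_taylor_two hΛ (x, p) hs hs1 h1)
      (tendsto_taylor_two hΛ (x, p) hs hs1 h2) ?_
    · linarith
    · filter_upwards [hle, hs0, hXf] with t h4 h5 h6
      simp only [Prod.mk_add_mk, add_sub_cancel, hΛ' (X t - x), hΛ' (c t - x)]
      have h7 : ∑ j, z j * H j (X t, p + t • k) ≤ 0 :=
        Finset.sum_nonpos fun j _ => mul_nonpos_of_nonneg_of_nonpos (hz j) (h6.2 j)
      gcongr
      linarith

/-! ### Limits of the difference quotient and the quadratic program -/

/-- Along any ultrafilter finer than `t ↓ 0`, the difference quotient `(X - x) / t` converges to a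
point of the directional critical set at which the quadratic form `∇²Λ(·, k)²` is at most its value
at any strictly critical direction. Here `X` is feasible over the ray and compares favourably
with curves tangent to the strictly critical directions (`hcomp`). -/
theorem limit_along_ultrafilter [FiniteDimensional ℝ E] [Fintype ιi]
    (hΛ : ContDiff ℝ 2 Λ) (hG : ∀ i, ContDiff ℝ 2 (G i))
    (hH : ∀ j, ContDiff ℝ 2 (H j)) (hfeas : Feas G H (x, p)) (hz : ∀ j, 0 ≤ z j)
    (hcompl : ∀ j, z j * H j (x, p) = 0) (hstat : ∀ v : E, fderiv ℝ Λ (x, p) (v, 0) = 0)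
    (hpos : ∀ d : E, d ≠ 0 → (∀ i, fderiv ℝ (G i) (x, p) (d, 0) = 0) →
      (∀ j, H j (x, p) = 0 → 0 < z j → fderiv ℝ (H j) (x, p) (d, 0) = 0) →
      0 < fderiv ℝ (fderiv ℝ Λ) (x, p) (d, 0) (d, 0))
    (𝒰 : Ultrafilter ℝ) (hl : (𝒰 : Filter ℝ) ≤ 𝓝[>] 0) {X : ℝ → E}
    (hX : Tendsto X (𝓝[>] 0) (𝓝 x))
    (hXf : ∀ᶠ t in 𝓝[>] (0 : ℝ), Feas G H (X t, p + t • k))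
    (hne : (StrictDirCrit G H z (x, p) k).Nonempty)
    (hcomp : ∀ d ∈ StrictDirCrit G H z (x, p) k, ∃ c : ℝ → E,
      Tendsto (fun t : ℝ => t⁻¹ • (c t - x)) (𝓝[>] 0) (𝓝 d) ∧ ∀ᶠ t in 𝓝[>] (0 : ℝ),
        Λ (X t, p + t • k) - ∑ j, z j * H j (X t, p + t • k) ≤ Λ (c t, p + t • k)) :
    ∃ u ∈ DirCrit G H z (x, p) k, Tendsto (fun t : ℝ => t⁻¹ • (X t - x)) 𝒰 (𝓝 u) ∧
      ∀ d ∈ StrictDirCrit G H z (x, p) k,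
        fderiv ℝ (fderiv ℝ Λ) (x, p) (u, k) (u, k) ≤
          fderiv ℝ (fderiv ℝ Λ) (x, p) (d, k) (d, k) := by
  have hproper : ProperSpace E := FiniteDimensional.proper ℝ E
  have ht0 : ∀ᶠ t in (𝒰 : Filter ℝ), 0 < t := hl self_mem_nhdsWithin
  have htlim : Tendsto (fun t : ℝ => t) 𝒰 (𝓝 0) :=
    (tendsto_nhdsWithin_of_tendsto_nhds tendsto_id).mono_left hl
  set s : ℝ → ℝ := fun t => ‖X t - x‖ + t with hsdef
  have hs0 : ∀ᶠ t in (𝒰 : Filter ℝ), 0 < s t := ht0.mono fun t ht => by positivity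
  have hs : Tendsto s 𝒰 (𝓝 0) := by
    simpa using (tendsto_iff_norm_sub_tendsto_zero.1 (hX.mono_left hl)).add htlim
  -- `(X t - x, t) / s t` has norm one for the sum norm, hence converges along `𝒰`
  have hmem : Metric.closedBall (0 : E) 1 ×ˢ Icc (0 : ℝ) 1 ∈
      𝒰.map fun t => ((s t)⁻¹ • (X t - x), (s t)⁻¹ * t) := by
    refine Ultrafilter.mem_map.2 ?_
    filter_upwards [ht0, hs0] with t h1 h2
    have h3 : ‖X t - x‖ ≤ s t := by simp only [hsdef]; linarith
    have h4 : t ≤ s t := by simp only [hsdef]; linarith [norm_nonneg (X t - x)]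
    refine ⟨?_, by positivity, ?_⟩
    · rw [mem_closedBall_zero_iff, norm_smul, norm_inv, Real.norm_of_nonneg h2.le,
        inv_mul_le_iff₀ h2, mul_one]
      exact h3
    · change (s t)⁻¹ * t ≤ 1
      rw [inv_mul_le_iff₀ h2, mul_one]
      exact h4
  obtain ⟨⟨u, τ⟩, ⟨-, hτ0, -⟩, huτ⟩ := isCompact_iff_ultrafilter_le_nhds'.1
    ((isCompact_closedBall (0 : E) 1).prod isCompact_Icc) _ hmem
  have huτ : Tendsto (fun t => ((s t)⁻¹ • (X t - x), (s t)⁻¹ * t)) 𝒰 (𝓝 (u, τ)) := huτ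
  have hu : Tendsto (fun t => (s t)⁻¹ • (X t - x)) 𝒰 (𝓝 u) := huτ.fst_nhds
  have hτ : Tendsto (fun t => (s t)⁻¹ * t) 𝒰 (𝓝 τ) := huτ.snd_nhds
  have hτ0 : 0 ≤ τ := hτ0
  have hnorm : ‖u‖ + τ = 1 := by
    refine tendsto_nhds_unique (hu.norm.add hτ) (tendsto_const_nhds.congr' ?_)
    filter_upwards [hs0] with t h2
    rw [norm_smul, norm_inv, Real.norm_of_nonneg h2.le, ← mul_add]
    exact (inv_mul_cancel₀ h2.ne').symm
  have key : ∀ d ∈ StrictDirCrit G H z (x, p) k, u ∈ DirCrit G H z (x, p) (τ • k) ∧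
      fderiv ℝ (fderiv ℝ Λ) (x, p) (u, τ • k) (u, τ • k) ≤
        fderiv ℝ (fderiv ℝ Λ) (x, p) (τ • (d, k)) (τ • (d, k)) := by
    intro d hd
    obtain ⟨c, hc, hle⟩ := hcomp d hd
    exact scaled_limit hΛ hG hH hfeas hz hcompl hstat hl (hl hXf) hc (hl hle) hs hs0 hu hτ
  obtain ⟨d₀, hd₀⟩ := hne
  obtain ⟨hK, hQ⟩ := key d₀ hd₀
  -- if `τ = 0`, then `u ≠ 0` is a direction covered by `hpos` with `∇²Λ(u, 0)² ≤ 0`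
  have hτpos : 0 < τ := by
    refine hτ0.lt_of_ne fun h0 => ?_
    subst h0
    simp only [zero_smul, map_zero, add_zero] at hK hQ hnorm
    have hu0 : u ≠ 0 := by rintro rfl; simp at hnorm
    exact absurd (hpos u hu0 hK.1 hK.2.1) (not_lt.2 hQ)
  have hsmul : ((u, τ • k) : E × P) = τ • (τ⁻¹ • u, k) := by
    simp [smul_smul, hτpos.ne']
  refine ⟨τ⁻¹ • u, ?_, ?_, fun d hd => ?_⟩
  · obtain ⟨h1, h2, h3⟩ := hK
    simp only [hsmul, map_smul, smul_eq_mul] at h1 h2 h3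
    refine ⟨fun i => ?_, fun j hj hzj => ?_, fun j hj hzj => ?_⟩
    · exact (mul_eq_zero.1 (h1 i)).resolve_left hτpos.ne'
    · exact (mul_eq_zero.1 (h2 j hj hzj)).resolve_left hτpos.ne'
    · exact nonpos_of_mul_nonpos_right (h3 j hj hzj) hτpos
  · refine ((hτ.inv₀ hτpos.ne').smul hu).congr' ?_
    filter_upwards [hs0, ht0] with t h1 h2
    rw [smul_smul]
    congr 1
    field_simp
  · have h1 := (key d hd).2
    rw [hsmul] at h1
    simp only [map_smul, _root_.smul_apply, smul_eq_mul] at h1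
    exact le_of_mul_le_mul_left (le_of_mul_le_mul_left h1 hτpos) hτpos

theorem add_smul_mem_strictDirCrit {d d₀ : E} {q : E × P} (hd : d ∈ DirCrit G H z q k)
    (hd₀ : d₀ ∈ StrictDirCrit G H z q 0) {ε : ℝ} (hε : 0 < ε) :
    d + ε • d₀ ∈ StrictDirCrit G H z q k := by
  have h : ((d + ε • d₀, k) : E × P) = (d, k) + ε • (d₀, 0) := by simp
  refine ⟨fun i => ?_, fun j hj hzj => ?_, fun j hj hzj => ?_⟩ <;>
    simp only [h, map_add, map_smul, smul_eq_mul]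
  · rw [hd.1, hd₀.1, mul_zero, add_zero]
  · rw [hd.2.1 j hj hzj, hd₀.2.1 j hj hzj, mul_zero, add_zero]
  · exact add_neg_of_nonpos_of_neg (hd.2.2 j hj hzj) (mul_neg_of_pos_of_neg hε (hd₀.2.2 j hj hzj))

/-- Strictly critical directions for `k` exist: first solve the linearized equality and strongly
active constraints, then move far enough along `d₀` to make the weakly active ones negative. -/
theorem strictDirCrit_nonempty [Finite ιi] {q : E × P}
    (hsurj : Function.Surjective fun v : E =>
      fun i : ιe ⊕ {j : ιi // H j q = 0 ∧ 0 < z j} =>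
        fderiv ℝ (Sum.elim G (fun j => H j.1) i) q (v, 0))
    {d₀ : E} (hd₀ : d₀ ∈ StrictDirCrit G H z q 0) (k : P) :
    (StrictDirCrit G H z q k).Nonempty := by
  obtain ⟨v, hv⟩ := hsurj fun i => -fderiv ℝ (Sum.elim G (fun j => H j.1) i) q (0, k)
  have hex : ∀ j, ∀ᶠ M : ℝ in atTop, H j q = 0 → z j = 0 →
      fderiv ℝ (H j) q (v, k) + M * fderiv ℝ (H j) q (d₀, 0) < 0 := by
    intro j
    by_cases hj : H j q = 0 ∧ z j = 0
    · have h1 : Tendsto (fun M : ℝ => fderiv ℝ (H j) q (v, k) + M * fderiv ℝ (H j) q (d₀, 0))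
          atTop atBot :=
        tendsto_atBot_add_const_left _ _
          (tendsto_id.atTop_mul_const_of_neg (hd₀.2.2 j hj.1 hj.2))
      filter_upwards [h1.eventually_lt_atBot 0] with M hM _ _ using hM
    · exact .of_forall fun M h1 h2 => absurd ⟨h1, h2⟩ hj
  obtain ⟨M, hM⟩ := (eventually_all.2 hex).exists
  have h : ((v + M • d₀, k) : E × P) = (v, k) + M • (d₀, 0) := by simp
  have h' : ((v, k) : E × P) = (v, 0) + (0, k) := by simp
  refine ⟨v + M • d₀, fun i => ?_, fun j hj hzj => ?_, fun j hj hzj => ?_⟩ <;>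
    simp only [h, map_add, map_smul, smul_eq_mul]
  · have h1 : fderiv ℝ (G i) q (v, 0) = -fderiv ℝ (G i) q (0, k) := congrFun hv (Sum.inl i)
    rw [hd₀.1, h', map_add, h1, mul_zero, add_zero, neg_add_cancel]
  · have h1 : fderiv ℝ (H j) q (v, 0) = -fderiv ℝ (H j) q (0, k) :=
      congrFun hv (Sum.inr ⟨j, hj, hzj⟩)
    rw [hd₀.2.1 j hj hzj, h', map_add, h1, mul_zero, add_zero, neg_add_cancel]
  · exact hM j hj hzj

/-- A quadratic form that is positive on the nonzero directions tangent to the equality and strongly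
active constraints has at most one minimizer on the convex set `DirCrit`: at the midpoint of two
minimizers its value would be smaller. -/
theorem dirCrit_minimizer_unique {q : E × P} (B : E × P →L[ℝ] E × P →L[ℝ] ℝ)
    (hpos : ∀ d : E, d ≠ 0 → (∀ i, fderiv ℝ (G i) q (d, 0) = 0) →
      (∀ j, H j q = 0 → 0 < z j → fderiv ℝ (H j) q (d, 0) = 0) → 0 < B (d, 0) (d, 0))
    {d₁ d₂ : E} (h₁ : d₁ ∈ DirCrit G H z q k) (h₂ : d₂ ∈ DirCrit G H z q k)
    (hm₁ : ∀ d ∈ DirCrit G H z q k, B (d₁, k) (d₁, k) ≤ B (d, k) (d, k))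
    (hm₂ : ∀ d ∈ DirCrit G H z q k, B (d₂, k) (d₂, k) ≤ B (d, k) (d, k)) : d₁ = d₂ := by
  by_contra hne
  have hsub : ((d₁ - d₂, 0) : E × P) = (d₁, k) - (d₂, k) := by simp
  have hmid : (((1 / 2 : ℝ) • (d₁ + d₂), k) : E × P) = (1 / 2 : ℝ) • ((d₁, k) + (d₂, k)) := by
    simp only [Prod.mk_add_mk, Prod.smul_mk, Prod.mk.injEq, true_and]
    rw [← two_smul ℝ k, smul_smul]; norm_num
  have hp := hpos (d₁ - d₂) (sub_ne_zero.2 hne)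
    (fun i => by rw [hsub, map_sub, h₁.1, h₂.1, sub_self])
    (fun j hj hzj => by rw [hsub, map_sub, h₁.2.1 j hj hzj, h₂.2.1 j hj hzj, sub_self])
  have hK : (1 / 2 : ℝ) • (d₁ + d₂) ∈ DirCrit G H z q k := by
    refine ⟨fun i => ?_, fun j hj hzj => ?_, fun j hj hzj => ?_⟩ <;>
      simp only [hmid, map_add, map_smul, smul_eq_mul]
    · rw [h₁.1, h₂.1]; simp
    · rw [h₁.2.1 j hj hzj, h₂.2.1 j hj hzj]; simp
    · linarith [h₁.2.2 j hj hzj, h₂.2.2 j hj hzj]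
  have e1 := hm₁ _ hK
  have e2 := hm₂ _ hK
  rw [hmid] at e1 e2
  rw [hsub] at hp
  simp only [map_add, map_smul, map_sub, _root_.smul_apply, _root_.add_apply, _root_.sub_apply,
    smul_eq_mul] at e1 e2 hp
  linarith

/-- The theorem in terms of joint derivatives in `(x, p)`: for the Lagrangian `Λ`, the objective of
the quadratic program is replaced by `∇²Λ(d, k)²`, SSOSC is `hpos`, and SMFCQ is split into the
surjectivity `hsurj` and the direction `d₀`. -/
theorem shapiro_joint [FiniteDimensional ℝ E] [Fintype ιe] [Fintype ιi] {y : ιe → ℝ}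
    (hF : ContDiff ℝ 2 F)
    (hG : ∀ i, ContDiff ℝ 2 (G i)) (hH : ∀ j, ContDiff ℝ 2 (H j))
    (hΛdef : ∀ q, Λ q = F q + ∑ i, y i * G i q + ∑ j, z j * H j q)
    (hfeas : Feas G H (x, p)) (hz : ∀ j, 0 ≤ z j)
    (hcompl : ∀ j, z j * H j (x, p) = 0) (hstat : ∀ v : E, fderiv ℝ Λ (x, p) (v, 0) = 0)
    (hpos : ∀ d : E, d ≠ 0 → (∀ i, fderiv ℝ (G i) (x, p) (d, 0) = 0) →
      (∀ j, H j (x, p) = 0 → 0 < z j → fderiv ℝ (H j) (x, p) (d, 0) = 0) →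
      0 < fderiv ℝ (fderiv ℝ Λ) (x, p) (d, 0) (d, 0))
    (hsurj : Function.Surjective fun v : E =>
      fun i : ιe ⊕ {j : ιi // H j (x, p) = 0 ∧ 0 < z j} =>
        fderiv ℝ (Sum.elim G (fun j => H j.1) i) (x, p) (v, 0))
    {d₀ : E} (hd₀ : d₀ ∈ StrictDirCrit G H z (x, p) 0)
    {U : Set P} (hU : U ∈ 𝓝 p) {xmap : P → E} (hx0 : xmap p = x)
    (hsol : ∀ p' ∈ U, LocSol F G H p' (xmap p'))
    (huniq : ∃ V ∈ 𝓝 x, ∀ p' ∈ U, ∀ x' ∈ V, LocSol F G H p' x' → x' = xmap p') (k : P) :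
    ∃ dx ∈ DirCrit G H z (x, p) k,
      Tendsto (fun t : ℝ => t⁻¹ • (xmap (p + t • k) - xmap p)) (𝓝[>] 0) (𝓝 dx) ∧
      (∀ d ∈ DirCrit G H z (x, p) k, fderiv ℝ (fderiv ℝ Λ) (x, p) (dx, k) (dx, k) ≤
        fderiv ℝ (fderiv ℝ Λ) (x, p) (d, k) (d, k)) ∧
      ∀ d ∈ DirCrit G H z (x, p) k, (∀ d' ∈ DirCrit G H z (x, p) k,
        fderiv ℝ (fderiv ℝ Λ) (x, p) (d, k) (d, k) ≤
          fderiv ℝ (fderiv ℝ Λ) (x, p) (d', k) (d', k)) → d = dx := by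
  have hΛ : ContDiff ℝ 2 Λ := by
    rw [funext hΛdef]
    exact (hF.add (ContDiff.sum fun i _ => contDiff_const.mul (hG i))).add
      (ContDiff.sum fun j _ => contDiff_const.mul (hH j))
  have hne := strictDirCrit_nonempty hsurj hd₀ k
  have hmin := fun (c : ℝ → E) hc => minimizer_on_ray (k := k) (c := c) hF.continuous
    (fun i => (hG i).continuous) (fun j => (hH j).continuous) hU hx0 hsol huniq hc
  have hX : Tendsto (fun t : ℝ => xmap (p + t • k)) (𝓝[>] 0) (𝓝 x) := by
    obtain ⟨d, hd⟩ := hne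
    obtain ⟨c, hc, hcf⟩ := feasible_curve hG hH hfeas hz hcompl hsurj hd
    exact (hmin c (tendsto_of_difference_quotient hc) (hcf.mono fun t ht => ht.1)).1
  have hXf : ∀ᶠ t in 𝓝[>] (0 : ℝ), Feas G H (xmap (p + t • k), p + t • k) := by
    filter_upwards [ray_tendsto p k hU] with t ht using (hsol _ ht).1
  have hcomp : ∀ d ∈ StrictDirCrit G H z (x, p) k, ∃ c : ℝ → E,
      Tendsto (fun t : ℝ => t⁻¹ • (c t - x)) (𝓝[>] 0) (𝓝 d) ∧ ∀ᶠ t in 𝓝[>] (0 : ℝ),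
        Λ (xmap (p + t • k), p + t • k) - ∑ j, z j * H j (xmap (p + t • k), p + t • k) ≤
          Λ (c t, p + t • k) := by
    intro d hd
    obtain ⟨c, hc, hcf⟩ := feasible_curve hG hH hfeas hz hcompl hsurj hd
    have hcx := tendsto_of_difference_quotient hc
    obtain ⟨-, r, hr, hle⟩ := hmin c hcx (hcf.mono fun t ht => ht.1)
    refine ⟨c, hc, ?_⟩
    filter_upwards [hle, hcf, hXf, hcx (Metric.closedBall_mem_nhds x hr)] with t h1 h2 h3 h4
    have h5 := h1 _ h4 h2.1
    simp only [hΛdef, h3.1, h2.1.1, h2.2, mul_zero, Finset.sum_const_zero, add_zero]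
    linarith
  have hlim : ∀ 𝒰 : Ultrafilter ℝ, (𝒰 : Filter ℝ) ≤ 𝓝[>] 0 → ∃ u ∈ DirCrit G H z (x, p) k,
      Tendsto (fun t : ℝ => t⁻¹ • (xmap (p + t • k) - x)) 𝒰 (𝓝 u) ∧
      ∀ d ∈ DirCrit G H z (x, p) k, fderiv ℝ (fderiv ℝ Λ) (x, p) (u, k) (u, k) ≤
        fderiv ℝ (fderiv ℝ Λ) (x, p) (d, k) (d, k) := by
    intro 𝒰 h𝒰
    obtain ⟨u, hu, hulim, humin⟩ := limit_along_ultrafilter hΛ hG hH hfeas hz hcompl hstat hpos 𝒰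
      h𝒰 hX hXf hne hcomp
    refine ⟨u, hu, hulim, fun d hd => ?_⟩
    -- approximate `d` by the strictly critical directions `d + ε d₀`
    have hc : Continuous fun ε : ℝ =>
        fderiv ℝ (fderiv ℝ Λ) (x, p) (d + ε • d₀, k) (d + ε • d₀, k) := by fun_prop
    have h1 : Tendsto (fun ε : ℝ =>
        fderiv ℝ (fderiv ℝ Λ) (x, p) (d + ε • d₀, k) (d + ε • d₀, k)) (𝓝[>] 0)
        (𝓝 (fderiv ℝ (fderiv ℝ Λ) (x, p) (d, k) (d, k))) :=
      tendsto_nhdsWithin_of_tendsto_nhds (hc.tendsto' _ _ (by simp))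
    refine ge_of_tendsto h1 ?_
    filter_upwards [self_mem_nhdsWithin] with ε hε
    exact humin _ (add_smul_mem_strictDirCrit hd hd₀ hε)
  obtain ⟨dx, hdx, -, hdxmin⟩ := hlim (Ultrafilter.of (𝓝[>] 0)) (Ultrafilter.of_le _)
  refine ⟨dx, hdx, ?_, hdxmin, fun d hd hdmin =>
    dirCrit_minimizer_unique _ hpos hd hdx hdmin hdxmin⟩
  rw [tendsto_iff_ultrafilter, hx0]
  intro 𝒰 h𝒰
  obtain ⟨u, hu, hulim, humin⟩ := hlim 𝒰 h𝒰
  rwa [← dirCrit_minimizer_unique _ hpos hu hdx humin hdxmin]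

end Core

section Multipliers

/-! ### Uniqueness of the multiplier -/

/-- Under SMFCQ at `z`, stated for the linearizations `a` and `b` of the constraints, the multiplier
`(y, z)` is the only one. Evaluating the difference of the stationarity equations at `d₀` shows that
`z'` vanishes on the weakly active constraints; the remaining gradients are independent. -/
theorem multiplier_unique {E ιe ιi : Type*} [AddCommGroup E] [Module ℝ E] [Fintype ιe]
    [Fintype ιi] {φ : E → ℝ} {a : ιe → E → ℝ} {b : ιi → E → ℝ} {act : ιi → Prop}
    {y y' : ιe → ℝ} {z z' : ιi → ℝ} (hz : ∀ j, 0 ≤ z j) (hz' : ∀ j, 0 ≤ z' j)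
    (hact : ∀ j, ¬ act j → z j = 0) (hact' : ∀ j, ¬ act j → z' j = 0)
    (hstat : ∀ v, φ v + ∑ i, y i * a i v + ∑ j, z j * b j v = 0)
    (hstat' : ∀ v, φ v + ∑ i, y' i * a i v + ∑ j, z' j * b j v = 0)
    (hsurj : Function.Surjective fun v : E => fun i : ιe ⊕ {j : ιi // act j ∧ 0 < z j} =>
      Sum.elim a (fun j => b j.1) i v)
    {d₀ : E} (ha : ∀ i, a i d₀ = 0) (hb : ∀ j, act j → 0 < z j → b j d₀ = 0)
    (hb' : ∀ j, act j → z j = 0 → b j d₀ < 0) : y' = y ∧ z' = z := by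
  have hdiff : ∀ v, ∑ i, (y' i - y i) * a i v + ∑ j, (z' j - z j) * b j v = 0 := by
    intro v
    simp only [sub_mul, Finset.sum_sub_distrib]
    linarith [hstat v, hstat' v]
  have hz0 : ∀ j, z j = 0 → z' j = 0 := by
    have h1 : ∀ j, (z' j - z j) * b j d₀ ≤ 0 := by
      intro j
      by_cases hj : act j
      · rcases (hz j).eq_or_lt with h | h
        · rw [← h, sub_zero]
          exact mul_nonpos_of_nonneg_of_nonpos (hz' j) (hb' j hj h.symm).le
        · rw [hb j hj h, mul_zero]
      · rw [hact j hj, hact' j hj]; simp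
    have h2 := hdiff d₀
    simp only [ha, mul_zero, Finset.sum_const_zero, zero_add] at h2
    intro j hj
    by_cases hja : act j
    · have h3 := (Finset.sum_eq_zero_iff_of_nonpos fun j _ => h1 j).1 h2 j (Finset.mem_univ j)
      rw [hj, sub_zero] at h3
      exact (mul_eq_zero.1 h3).resolve_right (hb' j hja hj).ne
    · exact hact' j hja
  -- test the difference of the two stationarity equations on a `v` with
  -- `a i v = y' i - y i` and `b j v = z' j - z j`
  obtain ⟨v, hv⟩ := hsurj (Sum.elim (fun i => y' i - y i) fun j => z' j.1 - z j.1)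
  have hva : ∀ i, a i v = y' i - y i := fun i => congrFun hv (Sum.inl i)
  have hvb : ∀ j, (z' j - z j) * b j v = (z' j - z j) * (z' j - z j) := by
    intro j
    rcases (hz j).eq_or_lt with h | h
    · simp [← h, hz0 j h.symm]
    · have hja : act j := by
        by_contra hcon
        exact h.ne' (hact j hcon)
      rw [show b j v = z' j - z j from congrFun hv (Sum.inr ⟨j, hja, h⟩)]
  have h4 := hdiff v
  simp only [hva, hvb] at h4
  have hA : 0 ≤ ∑ i, (y' i - y i) * (y' i - y i) :=
    Finset.sum_nonneg fun i _ => mul_self_nonneg _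
  have hB : 0 ≤ ∑ j, (z' j - z j) * (z' j - z j) :=
    Finset.sum_nonneg fun j _ => mul_self_nonneg _
  constructor
  · ext i
    have h5 := (Finset.sum_eq_zero_iff_of_nonneg fun i _ => mul_self_nonneg (y' i - y i)).1
      (by linarith) i (Finset.mem_univ i)
    exact sub_eq_zero.1 (mul_self_eq_zero.1 h5)
  · ext j
    have h5 := (Finset.sum_eq_zero_iff_of_nonneg fun j _ => mul_self_nonneg (z' j - z j)).1
      (by linarith) j (Finset.mem_univ j)
    exact sub_eq_zero.1 (mul_self_eq_zero.1 h5)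

end Multipliers

section Partial

/-! ### Partial derivatives in terms of joint derivatives -/

variable {E P : Type*} [NormedAddCommGroup E] [NormedSpace ℝ E]
  [NormedAddCommGroup P] [NormedSpace ℝ P] {F : E × P → ℝ} {x : E} {p : P}

theorem differentiable_fst_section (hF : Differentiable ℝ F) (p : P) :
    Differentiable ℝ fun x' => F (x', p) :=
  hF.comp (differentiable_id.prodMk (differentiable_const p))

theorem fderiv_fst (hF : Differentiable ℝ F) (x d : E) (p : P) :
    fderiv ℝ (fun x' => F (x', p)) x d = fderiv ℝ F (x, p) (d, 0) := by
  have h1 : HasFDerivAt (fun x' : E => (x', p)) (ContinuousLinearMap.inl ℝ E P) x :=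
    hasFDerivAt_prodMk_left x p
  have := HasFDerivAt.comp (g := F) (f := fun x' : E => (x', p)) x (hF (x, p)).hasFDerivAt h1
  rw [show fderiv ℝ (fun x' => F (x', p)) x = _ from this.fderiv]
  simp

theorem fderiv_snd (hF : Differentiable ℝ F) (x : E) (p k : P) :
    fderiv ℝ (fun p' => F (x, p')) p k = fderiv ℝ F (x, p) (0, k) := by
  have h1 : HasFDerivAt (fun p' : P => (x, p')) (ContinuousLinearMap.inr ℝ E P) p :=
    hasFDerivAt_prodMk_right x p
  have := HasFDerivAt.comp (g := F) (f := fun p' : P => (x, p')) p (hF (x, p)).hasFDerivAt h1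
  rw [show fderiv ℝ (fun p' => F (x, p')) p = _ from this.fderiv]
  simp

theorem fderiv_fst_add_fderiv_snd (hF : Differentiable ℝ F) (x d : E) (p k : P) :
    fderiv ℝ (fun x' => F (x', p)) x d + fderiv ℝ (fun p' => F (x, p')) p k =
      fderiv ℝ F (x, p) (d, k) := by
  rw [fderiv_fst hF, fderiv_snd hF, ← map_add, Prod.mk_add_mk, add_zero, zero_add]

theorem fderiv_fderiv_apply (hF : ContDiff ℝ 2 F) (q w v : E × P) :
    fderiv ℝ (fun q' => fderiv ℝ F q' v) q w = fderiv ℝ (fderiv ℝ F) q w v := by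
  have h : DifferentiableAt ℝ (fderiv ℝ F) q :=
    (hF.fderiv_right (m := 1) (by norm_num)).differentiable (by norm_num) q
  have := (h.hasFDerivAt.clm_apply (hasFDerivAt_const v q)).fderiv
  rw [this]
  simp

theorem differentiable_fderiv_apply (hF : ContDiff ℝ 2 F) (v : E × P) :
    Differentiable ℝ fun q => fderiv ℝ F q v :=
  ((hF.fderiv_right (m := 1) (by norm_num)).differentiable (by norm_num)).clm_apply
    (differentiable_const v)

end Partial

theorem hessQ_eq {F : (Fin n → ℝ) × (Fin l → ℝ) → ℝ} (hF : ContDiff ℝ 2 F)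
    (x d : Fin n → ℝ) (p : Fin l → ℝ) :
    hessQ (fun x' => F (x', p)) x d = fderiv ℝ (fderiv ℝ F) (x, p) (d, 0) (d, 0) := by
  have hd := hF.differentiable (by norm_num)
  simp only [hessQ, fderiv_fst hd]
  rw [fderiv_fst (differentiable_fderiv_apply hF (d, 0)) x d p, fderiv_fderiv_apply hF]

/-- Up to a term independent of `d`, the objective of the sensitivity program is
`½ ∇²Λ(d, k)²`, with the joint second derivative of the Lagrangian `Λ` in `(x, p)`. -/
theorem QPobj_eq {Λ : (Fin n → ℝ) × (Fin l → ℝ) → ℝ} (hΛ : ContDiff ℝ 2 Λ)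
    {f : (Fin n → ℝ) → (Fin l → ℝ) → ℝ} {g : (Fin n → ℝ) → (Fin l → ℝ) → Fin me → ℝ}
    {h : (Fin n → ℝ) → (Fin l → ℝ) → Fin mi → ℝ} {y : Fin me → ℝ} {z : Fin mi → ℝ}
    (hdef : ∀ x p, Lag f g h p x y z = Λ (x, p)) (p k : Fin l → ℝ) (x d : Fin n → ℝ) :
    QPobj f g h p x y z k d = (1 / 2) * fderiv ℝ (fderiv ℝ Λ) (x, p) (d, k) (d, k) -
      (1 / 2) * fderiv ℝ (fderiv ℝ Λ) (x, p) (0, k) (0, k) := by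
  have hd := hΛ.differentiable (by norm_num)
  have hsymm : IsSymmSndFDerivAt ℝ Λ (x, p) := hΛ.contDiffAt.isSymmSndFDerivAt (by simp)
  have hsplit : ((d, k) : (Fin n → ℝ) × (Fin l → ℝ)) = (d, 0) + (0, k) := by simp
  simp only [QPobj, hdef, hessQ_eq hΛ, fderiv_fst hd]
  rw [fderiv_snd (differentiable_fderiv_apply hΛ (d, 0)) x p k, fderiv_fderiv_apply hΛ, hsplit]
  simp only [map_add, _root_.add_apply]
  rw [hsymm (d, 0) (0, k)]
  ring

/-- **Shapiro.** Under SMFCQ and SSOSC at a solution $x^*$ of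
NLP($p^*$) with (unique) multipliers $(y^*,z^*)$, the locally unique solution
map is directionally differentiable in every direction $h$, and the directional
derivative is the unique solution of the QP
$\min_d ½ dᵀ∇²_{xx}L d + hᵀ∇²_{xp}L d$ over $K_{p^*}(x^*,z^*;h)$. -/
theorem shapiro_directional_derivative
    (hf : ContDiff ℝ 2 fun q : (Fin n → ℝ) × (Fin l → ℝ) => f q.1 q.2)
    (hg : ∀ i : Fin me, ContDiff ℝ 2 fun q : (Fin n → ℝ) × (Fin l → ℝ) => g q.1 q.2 i)
    (hh : ∀ j : Fin mi, ContDiff ℝ 2 fun q : (Fin n → ℝ) × (Fin l → ℝ) => h q.1 q.2 j)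
    (hkkt : IsKKT f g h p x y z)
    (hsmfcq : SMFCQ g h p x z)
    (hssosc : SSOSC f g h p x)
    -- xmap is the locally unique solution map with xmap p = x
    (U : Set (Fin l → ℝ)) (hU : U ∈ 𝓝 p)
    (xmap : (Fin l → ℝ) → (Fin n → ℝ))
    (hx0 : xmap p = x)
    (hsol : ∀ p' ∈ U, IsLocalSol f g h p' (xmap p'))
    (huniq : ∃ V ∈ 𝓝 x, ∀ p' ∈ U, ∀ x' ∈ V, IsLocalSol f g h p' x' → x' = xmap p') :
    ∀ hdir : Fin l → ℝ,
      ∃ dx : Fin n → ℝ,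
        -- dx is the directional derivative of xmap at p in direction hdir
        Tendsto (fun t : ℝ => t⁻¹ • (xmap (p + t • hdir) - xmap p))
          (𝓝[>] (0 : ℝ)) (𝓝 dx) ∧
        -- dx is the unique solution of the sensitivity QP over the
        -- directional critical set
        dx ∈ Kset g h p x z hdir ∧
        (∀ d ∈ Kset g h p x z hdir,
          QPobj f g h p x y z hdir dx ≤ QPobj f g h p x y z hdir d) ∧
        (∀ d ∈ Kset g h p x z hdir,
          (∀ d' ∈ Kset g h p x z hdir,
            QPobj f g h p x y z hdir d ≤ QPobj f g h p x y z hdir d') → d = dx) := by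
  have hfd := hf.differentiable (by norm_num)
  have hgd := fun i => (hg i).differentiable (by norm_num)
  have hhd := fun j => (hh j).differentiable (by norm_num)
  -- the data as functions of the pair `(x, p)`
  let F : (Fin n → ℝ) × (Fin l → ℝ) → ℝ := fun q => f q.1 q.2
  let G : Fin me → (Fin n → ℝ) × (Fin l → ℝ) → ℝ := fun i q => g q.1 q.2 i
  let H : Fin mi → (Fin n → ℝ) × (Fin l → ℝ) → ℝ := fun j q => h q.1 q.2 j
  let Λ : (Fin n → ℝ) × (Fin l → ℝ) → ℝ := fun q => Lag f g h q.2 q.1 y z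
  have hΛ : ContDiff ℝ 2 Λ := (hf.add (ContDiff.sum fun i _ => contDiff_const.mul (hg i))).add
    (ContDiff.sum fun j _ => contDiff_const.mul (hh j))
  have hΛd : Differentiable ℝ Λ := hΛ.differentiable (by norm_num)
  have hGx : ∀ i v, fderiv ℝ (fun x' => g x' p i) x v = fderiv ℝ (G i) (x, p) (v, 0) :=
    fun i v => fderiv_fst (hgd i) x v p
  have hHx : ∀ j v, fderiv ℝ (fun x' => h x' p j) x v = fderiv ℝ (H j) (x, p) (v, 0) :=
    fun j v => fderiv_fst (hhd j) x v p
  have hfeas : ∀ x' p', Feas G H (x', p') ↔ g x' p' = 0 ∧ h x' p' ≤ 0 := fun x' p' => by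
    simp [Feas, G, H, funext_iff, Pi.le_def]
  have hloc : ∀ x' p', IsLocalSol f g h p' x' ↔ LocSol F G H p' x' := fun x' p' => by
    simp only [IsLocalSol, LocSol, hfeas, and_assoc, and_imp, F]
  have hcompl_of : ∀ y' z', IsKKT f g h p x y' z' → ∀ j, z' j * h x p j = 0 := by
    intro y' z' hk j
    have h1 : ∀ j, z' j * h x p j ≤ 0 := fun j =>
      mul_nonpos_of_nonneg_of_nonpos (hk.2.2.2.1 j) (hk.2.2.1 j)
    exact (Finset.sum_eq_zero_iff_of_nonpos fun j _ => h1 j).1 hk.2.2.2.2 j (Finset.mem_univ j)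
  have hstat_of : ∀ y' z', IsKKT f g h p x y' z' → ∀ v, fderiv ℝ (fun x' => f x' p) x v +
      ∑ i, y' i * fderiv ℝ (fun x' => g x' p i) x v +
      ∑ j, z' j * fderiv ℝ (fun x' => h x' p j) x v = 0 := by
    intro y' z' hk v
    have ef : HasFDerivAt (fun x' => f x' p) (fderiv ℝ (fun x' => f x' p) x) x :=
      (differentiable_fst_section hfd p x).hasFDerivAt
    have eg : ∀ i, HasFDerivAt (fun x' => g x' p i) (fderiv ℝ (fun x' => g x' p i) x) x :=
      fun i => (differentiable_fst_section (hgd i) p x).hasFDerivAt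
    have eh : ∀ j, HasFDerivAt (fun x' => h x' p j) (fderiv ℝ (fun x' => h x' p j) x) x :=
      fun j => (differentiable_fst_section (hhd j) p x).hasFDerivAt
    have e := ((ef.add (HasFDerivAt.fun_sum fun i (_ : i ∈ Finset.univ) =>
      (eg i).const_mul (y' i))).add (HasFDerivAt.fun_sum fun j (_ : j ∈ Finset.univ) =>
      (eh j).const_mul (z' j))).fderiv
    have e' := congrArg (fun T => T v) (e.symm.trans hk.1)
    simpa [_root_.sum_apply] using e'
  obtain ⟨hli, d₀, hd₀g, hd₀p, hd₀n⟩ := hsmfcq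
  have hsurjx := surjective_of_linearIndependent
    (fun i : Fin me ⊕ {j : Fin mi // h x p j = 0 ∧ 0 < z j} =>
      Sum.elim (fun i => fderiv ℝ (fun x' => g x' p i) x)
        (fun j => fderiv ℝ (fun x' => h x' p j.1) x) i)
    (by
      convert hli using 2 with i
      rcases i with i | j <;> rfl)
  obtain ⟨⟨y', z'⟩, hyz, hpos⟩ := hssosc
  -- the multiplier provided by SSOSC is `(y, z)`
  obtain ⟨rfl, rfl⟩ : y' = y ∧ z' = z := by
    have hyz : IsKKT f g h p x y' z' := hyz
    refine multiplier_unique (act := fun j => h x p j = 0) hkkt.2.2.2.1 hyz.2.2.2.1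
      (fun j hj => (mul_eq_zero.1 (hcompl_of y z hkkt j)).resolve_right hj)
      (fun j hj => (mul_eq_zero.1 (hcompl_of y' z' hyz j)).resolve_right hj)
      (hstat_of y z hkkt) (hstat_of y' z' hyz) ?_ hd₀g hd₀p hd₀n
    convert hsurjx using 3 with v i
    rcases i with i | j <;> rfl
  intro k
  obtain ⟨dx, hK, hlim, hmin, huni⟩ := shapiro_joint (F := F) (Λ := Λ) (G := G) (H := H)
    (x := x) (p := p) (y := y') (z := z') hf hg hh (fun q => rfl)
    ((hfeas x p).2 ⟨hkkt.2.1, hkkt.2.2.1⟩) hkkt.2.2.2.1 (hcompl_of y' z' hkkt)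
    (fun v => by
      rw [← fderiv_fst hΛd]
      exact congrArg (fun T => T v) hkkt.1)
    (fun d hd h1 h2 => by
      rw [← hessQ_eq hΛ]
      exact hpos d ⟨fun i => (hGx i d).trans (h1 i), fun j hj hzj => (hHx j d).trans (h2 j hj hzj)⟩
        hd)
    (by
      convert hsurjx using 3 with v i
      rcases i with i | j
      exacts [(hGx i v).symm, (hHx j v).symm])
    (d₀ := d₀) ⟨fun i => (hGx i d₀).symm.trans (hd₀g i),
      fun j hj hzj => (hHx j d₀).symm.trans (hd₀p j hj hzj),
      fun j hj hzj => (hHx j d₀).symm.trans_lt (hd₀n j hj hzj)⟩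
    hU hx0 (fun p' hp' => (hloc _ _).1 (hsol p' hp'))
    (by
      obtain ⟨V, hV, hVu⟩ := huniq
      exact ⟨V, hV, fun p' hp' x' hx' hl => hVu p' hp' x' hx' ((hloc _ _).2 hl)⟩) k
  have hKeq : Kset g h p x z' k = DirCrit G H z' (x, p) k := by
    have e1 : ∀ i d, fderiv ℝ (fun x' => g x' p i) x d + fderiv ℝ (fun p' => g x p' i) p k =
        fderiv ℝ (G i) (x, p) (d, k) := fun i d => fderiv_fst_add_fderiv_snd (hgd i) x d p k
    have e2 : ∀ j d, fderiv ℝ (fun x' => h x' p j) x d + fderiv ℝ (fun p' => h x p' j) p k =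
        fderiv ℝ (H j) (x, p) (d, k) := fun j d => fderiv_fst_add_fderiv_snd (hhd j) x d p k
    simp only [Kset, DirCrit, e1, e2, H]
  have hQ := QPobj_eq hΛ (fun _ _ => rfl) p k x
  refine ⟨dx, hlim, hKeq ▸ hK, fun d hd => ?_, fun d hd hdmin => huni d (hKeq ▸ hd) ?_⟩
  · rw [hQ, hQ]
    linarith [hmin d (hKeq ▸ hd)]
  · intro d' hd'
    have := hdmin d' (hKeq ▸ hd')
    rw [hQ, hQ] at this
    linarith

end SensNLP
end

section
/- (Dempe) Let x* be a KKT stationary solution of NLP(p*), let (y, z) ∈ M_{p*}(x*) and let h ∈ ℝ^ℓ. Then the directional critical set K_{p*}(x*, z; h) is nonempty if and only if (y, z) belongs to the set S_{p*}(x*; h) of maximizers over M_{p*}(x*) of the linear functional (y', z') ↦ y'ᵀ (J_p g(x*,p*)) h + z'ᵀ (J_p h(x*,p*)) h. -/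
/-!
The set `K` is the solution set of a linear system in `d`: with `a i` the `x`-derivative of the
`i`-th constraint and `c i` its `p`-derivative along the direction, it asks `a i d + c i = 0` for
equality and strongly active constraints and `a i d + c i ≤ 0` for weakly active ones. The claim is
linear programming duality, once the stationarity condition is written out as
`Df + ∑ yᵢ Dgᵢ + ∑ zⱼ Dhⱼ = 0` (`fderiv_Lag`).

If `d ∈ K` and `(y', z')` is another multiplier, subtracting the two stationarity conditions at `d`
shows that the change of the linear functional is `∑ (z'ⱼ - zⱼ) (aⱼ d + cⱼ)`, whose terms are all
nonpositive.

If `K` is empty, Farkas' lemma (`exists_multiplier_of_infeasible`) gives `(u, w)`, with `w ≥ 0` on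
weakly active constraints, vanishing on inactive ones, `∑ uᵢ Dgᵢ + ∑ wⱼ Dhⱼ = 0` and functional
value `1`. For small `ε > 0` the pair `(y + ε u, z + ε w)` is still a multiplier, with a strictly
larger value, so `(y, z)` is not a maximizer.

Farkas' lemma is proved by induction on the number of functionals (an argument of D. Bartl), which
avoids showing that finitely generated cones are closed.
-/

open Filter Topology Set Matrix

attribute [local instance] Classical.propDecidable

namespace SensNLP

variable {n l me mi : ℕ}
variable (f : (Fin n → ℝ) → (Fin l → ℝ) → ℝ)
  (g : (Fin n → ℝ) → (Fin l → ℝ) → Fin me → ℝ)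
  (h : (Fin n → ℝ) → (Fin l → ℝ) → Fin mi → ℝ)
  (p : Fin l → ℝ) (x : Fin n → ℝ) (y : Fin me → ℝ) (z : Fin mi → ℝ)
  (hdir : Fin l → ℝ)

/-! ### Farkas' lemma and systems of linear inequalities -/

/-- **Farkas' lemma** for finitely many linear functionals on an arbitrary real vector space. -/
lemma farkas {V ι : Type*} [AddCommGroup V] [Module ℝ V] (s : Finset ι) :
    ∀ (a : ι → V →ₗ[ℝ] ℝ) (b : V →ₗ[ℝ] ℝ),
      (∀ v, (∀ i ∈ s, a i v ≤ 0) → b v ≤ 0) →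
      ∃ c : ι → ℝ, (∀ i ∈ s, 0 ≤ c i) ∧ ∀ v, b v = ∑ i ∈ s, c i * a i v := by
  induction s using Finset.induction_on with
  | empty =>
    intro a b H
    refine ⟨0, by simp, fun v => ?_⟩
    have h1 := H v (by simp)
    have h2 := H (-v) (by simp)
    rw [map_neg] at h2
    simp only [Finset.sum_empty]
    linarith
  | insert k s hk ih =>
    intro a b H
    by_cases hs : ∀ v, (∀ i ∈ s, a i v ≤ 0) → b v ≤ 0
    · obtain ⟨c, hc, hb⟩ := ih a b hs
      refine ⟨Function.update c k 0, fun i hi => ?_, fun v => ?_⟩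
      · rcases eq_or_ne i k with rfl | hik
        · simp
        · rw [Function.update_of_ne hik]
          exact hc i (Finset.mem_of_mem_insert_of_ne hi hik)
      · rw [Finset.sum_insert hk, hb v]
        simp only [Function.update_self, zero_mul, zero_add]
        refine Finset.sum_congr rfl fun i hi => ?_
        rw [Function.update_of_ne (ne_of_mem_of_not_mem hi hk)]
    · push Not at hs
      obtain ⟨v₀, hv₀, hbv₀⟩ := hs
      have hkv : 0 < a k v₀ := by
        by_contra hcon
        refine absurd (H v₀ fun i hi => ?_) (not_le.2 hbv₀)
        rcases Finset.mem_insert.1 hi with rfl | hi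
        · exact not_lt.1 hcon
        · exact hv₀ i hi
      -- Every functional is composed with the projection onto `ker (a k)` along `v₀`.
      set t := (a k v₀)⁻¹ with ht
      have htpos : 0 < t := inv_pos.2 hkv
      have htk : t * a k v₀ = 1 := inv_mul_cancel₀ hkv.ne'
      obtain ⟨c, hc, hb⟩ := ih (fun i => a i - (t * a i v₀) • a k) (b - (t * b v₀) • a k) (by
        intro v hv
        have := H (v - (t * a k v) • v₀) (fun i hi => by
          rcases Finset.mem_insert.1 hi with rfl | hi
          · simp only [map_sub, map_smul, smul_eq_mul]
            have : a i v - t * a i v * a i v₀ = 0 := by linear_combination -(a i v) * htk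
            exact this.le
          · have := hv i hi
            simp only [LinearMap.sub_apply, LinearMap.smul_apply, smul_eq_mul] at this
            simp only [map_sub, map_smul, smul_eq_mul]
            linarith)
        simp only [map_sub, map_smul, smul_eq_mul] at this
        simp only [LinearMap.sub_apply, LinearMap.smul_apply, smul_eq_mul]
        linarith)
      refine ⟨Function.update c k (t * (b v₀ - ∑ i ∈ s, c i * a i v₀)),
        fun i hi => ?_, fun v => ?_⟩
      · rcases eq_or_ne i k with rfl | hik
        · rw [Function.update_self]
          have : ∑ i ∈ s, c i * a i v₀ ≤ 0 :=
            Finset.sum_nonpos fun i hi => mul_nonpos_of_nonneg_of_nonpos (hc i hi) (hv₀ i hi)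
          exact mul_nonneg htpos.le (by linarith)
        · rw [Function.update_of_ne hik]
          exact hc i (Finset.mem_of_mem_insert_of_ne hi hik)
      · rw [Finset.sum_insert hk, Function.update_self]
        have hsum : ∑ i ∈ s, Function.update c k (t * (b v₀ - ∑ i ∈ s, c i * a i v₀)) i * a i v
            = ∑ i ∈ s, c i * a i v :=
          Finset.sum_congr rfl fun i hi => by
            rw [Function.update_of_ne (ne_of_mem_of_not_mem hi hk)]
        have hbv := hb v
        simp only [LinearMap.sub_apply, LinearMap.smul_apply, smul_eq_mul] at hbv
        have hsplit : ∑ i ∈ s, c i * (a i v - t * a i v₀ * a k v)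
            = ∑ i ∈ s, c i * a i v - t * (∑ i ∈ s, c i * a i v₀) * a k v := by
          rw [Finset.mul_sum, Finset.sum_mul, ← Finset.sum_sub_distrib]
          exact Finset.sum_congr rfl fun i _ => by ring
        rw [hsum]
        linarith

/-- Theorem of the alternative for an inhomogeneous linear system in which the rows satisfying `P`
are equations and the other rows are inequalities. It follows from Farkas' lemma on `V × ℝ`
applied to the homogenized rows `(v, t) ↦ a i v + t * c i` and the functional `(v, t) ↦ t`. -/
lemma exists_multiplier_of_infeasible {V ι : Type*} [AddCommGroup V] [Module ℝ V] [Fintype ι]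
    (P : ι → Prop) (a : ι → V →ₗ[ℝ] ℝ) (c : ι → ℝ)
    (H : ¬ ∃ v, ∀ i, a i v + c i ≤ 0 ∧ (P i → a i v + c i = 0)) :
    ∃ w : ι → ℝ, (∀ i, ¬ P i → 0 ≤ w i) ∧ (∀ v, ∑ i, w i * a i v = 0) ∧
      ∑ i, w i * c i = 1 := by
  -- `A i` is the homogenized row; equations also contribute the reversed inequality.
  let A : ι → V × ℝ →ₗ[ℝ] ℝ := fun i =>
    a i ∘ₗ LinearMap.fst ℝ V ℝ + c i • LinearMap.snd ℝ V ℝ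
  have hA : ∀ i v t, A i (v, t) = a i v + c i * t := fun i v t => by simp [A]
  obtain ⟨m, hm, hb⟩ := farkas (Finset.univ : Finset (ι ⊕ ι))
    (Sum.elim A fun i => if P i then -A i else 0) (LinearMap.snd ℝ V ℝ) (by
      rintro ⟨v, t⟩ hv
      by_contra ht
      simp only [LinearMap.snd_apply, not_le] at ht
      refine H ⟨t⁻¹ • v, fun i => ?_⟩
      have h1 := hv (Sum.inl i) (Finset.mem_univ _)
      have h2 := hv (Sum.inr i) (Finset.mem_univ _)
      simp only [Sum.elim_inl, Sum.elim_inr, hA] at h1 h2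
      have key : a i (t⁻¹ • v) + c i = t⁻¹ * (a i v + c i * t) := by
        rw [map_smul, smul_eq_mul]
        field_simp
      rw [key]
      refine ⟨mul_nonpos_of_nonneg_of_nonpos (inv_pos.2 ht).le h1, fun hP => ?_⟩
      rw [if_pos hP, LinearMap.neg_apply, hA] at h2
      rw [le_antisymm h1 (by linarith), mul_zero])
  have hsum : ∀ v t, ∑ i, (m (Sum.inl i) - if P i then m (Sum.inr i) else 0) *
      (a i v + c i * t) = t := by
    intro v t
    have := hb (v, t)
    rw [Fintype.sum_sum_type, ← Finset.sum_add_distrib] at this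
    refine Eq.trans ?_ this.symm
    refine Finset.sum_congr rfl fun i _ => ?_
    simp only [Sum.elim_inl, Sum.elim_inr]
    split_ifs
    · rw [LinearMap.neg_apply, hA]
      ring
    · rw [LinearMap.zero_apply, hA]
      ring
  refine ⟨fun i => m (Sum.inl i) - if P i then m (Sum.inr i) else 0, fun i hi => ?_,
    fun v => ?_, ?_⟩
  · simpa [hi] using hm (Sum.inl i) (Finset.mem_univ _)
  · simpa using hsum v 0
  · simpa using hsum 0 1

/-! ### Stationarity, complementarity and the directional critical set -/

lemma fderiv_Lag (hf : DifferentiableAt ℝ (fun x' => f x' p) x)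
    (hg : ∀ i, DifferentiableAt ℝ (fun x' => g x' p i) x)
    (hh : ∀ j, DifferentiableAt ℝ (fun x' => h x' p j) x) (d : Fin n → ℝ) :
    fderiv ℝ (fun x' => Lag f g h p x' y z) x d =
      fderiv ℝ (fun x' => f x' p) x d + ∑ i, y i * fderiv ℝ (fun x' => g x' p i) x d
        + ∑ j, z j * fderiv ℝ (fun x' => h x' p j) x d := by
  have H : HasFDerivAt (fun x' => Lag f g h p x' y z)
      (fderiv ℝ (fun x' => f x' p) x + ∑ i, y i • fderiv ℝ (fun x' => g x' p i) x
        + ∑ j, z j • fderiv ℝ (fun x' => h x' p j) x) x :=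
    (hf.hasFDerivAt.add (HasFDerivAt.fun_sum fun i _ => (hg i).hasFDerivAt.const_mul (y i))).add
      (HasFDerivAt.fun_sum fun j _ => (hh j).hasFDerivAt.const_mul (z j))
  rw [H.fderiv]
  simp

/-- Complementarity holds termwise, since all terms `z j * h j` have the same sign. -/
lemma IsKKT.mul_eq_zero {f g h p x y z} (H : IsKKT (n := n) (l := l) (me := me) (mi := mi)
    f g h p x y z) (j : Fin mi) : z j * h x p j = 0 := by
  obtain ⟨-, -, hle, hz, hsum⟩ := H
  exact (Finset.sum_eq_zero_iff_of_nonpos fun j _ =>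
    mul_nonpos_of_nonneg_of_nonpos (hz j) (hle j)).1 hsum j (Finset.mem_univ j)

/-- **Dempe.** For a KKT stationary solution $x^*$, a multiplier
$(y,z) ∈ M_{p^*}(x^*)$ and a direction $h$, the directional critical set
$K_{p^*}(x^*,z;h)$ is nonempty iff $(y,z)$ maximizes
$(y',z') ↦ y'ᵀ(J_p g)h + z'ᵀ(J_p h)h$ over $M_{p^*}(x^*)$. -/
theorem dempe_critical_set_nonempty_iff_maximizer
    (hf : ContDiff ℝ 2 fun q : (Fin n → ℝ) × (Fin l → ℝ) => f q.1 q.2)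
    (hg : ∀ i : Fin me, ContDiff ℝ 2 fun q : (Fin n → ℝ) × (Fin l → ℝ) => g q.1 q.2 i)
    (hh : ∀ j : Fin mi, ContDiff ℝ 2 fun q : (Fin n → ℝ) × (Fin l → ℝ) => h q.1 q.2 j)
    (hstat : (MultSet f g h p x).Nonempty)
    (hyz : (y, z) ∈ MultSet f g h p x)
    (hdir' : Fin l → ℝ) :
    (Kset g h p x z hdir').Nonempty ↔
      ∀ yz' ∈ MultSet f g h p x,
        (∑ i, yz'.1 i * fderiv ℝ (fun p' => g x p' i) p hdir') +
          (∑ j, yz'.2 j * fderiv ℝ (fun p' => h x p' j) p hdir') ≤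
        (∑ i, y i * fderiv ℝ (fun p' => g x p' i) p hdir') +
          (∑ j, z j * fderiv ℝ (fun p' => h x p' j) p hdir') := by
  have hfx : DifferentiableAt ℝ (fun x' => f x' p) x :=
    ((hf.differentiable (by norm_num)).comp
      (differentiable_id.prodMk (differentiable_const p))).differentiableAt
  have hgx : ∀ i, DifferentiableAt ℝ (fun x' => g x' p i) x := fun i =>
    (((hg i).differentiable (by norm_num)).comp
      (differentiable_id.prodMk (differentiable_const p))).differentiableAt
  have hhx : ∀ j, DifferentiableAt ℝ (fun x' => h x' p j) x := fun j =>
    (((hh j).differentiable (by norm_num)).comp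
      (differentiable_id.prodMk (differentiable_const p))).differentiableAt
  have hL : ∀ y' z' d, _ := fun y' z' d => fderiv_Lag f g h p x y' z' hfx hgx hhx d
  have hK : IsKKT f g h p x y z := hyz
  have hcomp := hK.mul_eq_zero
  obtain ⟨hst, hgz, hle, hz, hsum⟩ := id hK
  -- `G`, `Hx` are the constraint derivatives in `x`; `b`, `c` those in `p` along the direction.
  set G : Fin me → (Fin n → ℝ) →L[ℝ] ℝ := fun i => fderiv ℝ (fun x' => g x' p i) x with hG
  set Hx : Fin mi → (Fin n → ℝ) →L[ℝ] ℝ := fun j => fderiv ℝ (fun x' => h x' p j) x with hHx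
  set b : Fin me → ℝ := fun i => fderiv ℝ (fun p' => g x p' i) p hdir' with hb
  set c : Fin mi → ℝ := fun j => fderiv ℝ (fun p' => h x p' j) p hdir' with hc
  change _ ↔ ∀ yz' ∈ MultSet f g h p x, (∑ i, yz'.1 i * b i) + (∑ j, yz'.2 j * c j) ≤
    (∑ i, y i * b i) + (∑ j, z j * c j)
  change ∀ y' z' d, fderiv ℝ (fun x' => Lag f g h p x' y' z') x d =
      fderiv ℝ (fun x' => f x' p) x d + ∑ i, y' i * G i d + ∑ j, z' j * Hx j d at hL
  have hst0 : ∀ d, fderiv ℝ (fun x' => f x' p) x d + ∑ i, y i * G i d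
      + ∑ j, z j * Hx j d = 0 := fun d => by rw [← hL, hst]; rfl
  constructor
  · rintro ⟨d, hd1, hd2, hd3⟩ ⟨y', z'⟩ hyz'
    have hK' : IsKKT f g h p x y' z' := hyz'
    have hcomp' := hK'.mul_eq_zero
    have e2 : fderiv ℝ (fun x' => f x' p) x d + ∑ i, y' i * G i d
      + ∑ j, z' j * Hx j d = 0 := by rw [← hL, hK'.1]; rfl
    have e1 := hst0 d
    have e3 : ∑ i, y' i * b i - ∑ i, y i * b i = ∑ i, y i * G i d - ∑ i, y' i * G i d := by
      rw [← Finset.sum_sub_distrib, ← Finset.sum_sub_distrib]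
      refine Finset.sum_congr rfl fun i _ => ?_
      have : G i d + b i = 0 := hd1 i
      linear_combination (y' i - y i) * this
    have e4 : ∑ j, z' j * c j - ∑ j, z j * c j ≤ ∑ j, z j * Hx j d - ∑ j, z' j * Hx j d := by
      rw [← Finset.sum_sub_distrib, ← Finset.sum_sub_distrib]
      refine Finset.sum_le_sum fun j _ => ?_
      suffices (z' j - z j) * (Hx j d + c j) ≤ 0 by linarith
      by_cases hj : h x p j = 0
      · rcases (hz j).eq_or_lt with h0 | h0
        · have h0' : z j = 0 := h0.symm
          have : Hx j d + c j ≤ 0 := hd3 j hj h0'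
          have hz' : 0 ≤ z' j := hK'.2.2.2.1 j
          rw [h0', sub_zero]
          exact mul_nonpos_of_nonneg_of_nonpos hz' this
        · have : Hx j d + c j = 0 := hd2 j hj h0
          rw [this, mul_zero]
      · rw [(mul_eq_zero.1 (hcomp j)).resolve_right hj,
          (mul_eq_zero.1 (hcomp' j)).resolve_right hj]
        simp
    dsimp only
    linarith
  · intro hmax
    by_contra hne
    -- Rows of inactive constraints are replaced by the trivial inequality `0 ≤ 0`.
    obtain ⟨w, hw0, hw1, hw2⟩ := exists_multiplier_of_infeasible (V := Fin n → ℝ)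
      (ι := Fin me ⊕ Fin mi) (Sum.elim (fun _ => True) fun j => 0 < z j)
      (Sum.elim (fun i => (G i : (Fin n → ℝ) →ₗ[ℝ] ℝ))
        fun j => if h x p j = 0 then (Hx j : (Fin n → ℝ) →ₗ[ℝ] ℝ) else 0)
      (Sum.elim b fun j => if h x p j = 0 then c j else 0) (by
        rintro ⟨d, hd⟩
        refine hne ⟨d, fun i => (hd (Sum.inl i)).2 trivial, fun j hj hzj => ?_, fun j hj _ => ?_⟩
        · simpa [hj] using (hd (Sum.inr j)).2 hzj
        · simpa [hj] using (hd (Sum.inr j)).1)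
    set u : Fin me → ℝ := fun i => w (Sum.inl i) with hu
    set v : Fin mi → ℝ := fun j => if h x p j = 0 then w (Sum.inr j) else 0 with hv
    have hv0 : ∀ j, z j = 0 → 0 ≤ v j := fun j hj => by
      by_cases ha : h x p j = 0
      · simpa [hv, ha] using hw0 (Sum.inr j) (by simp [hj])
      · simp [hv, ha]
    have hv1 : ∀ d, ∑ i, u i * G i d + ∑ j, v j * Hx j d = 0 := fun d => by
      rw [← hw1 d, Fintype.sum_sum_type]
      congr 1
      refine Finset.sum_congr rfl fun j _ => ?_
      by_cases ha : h x p j = 0 <;> simp [hv, ha]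
    have hv2 : ∑ i, u i * b i + ∑ j, v j * c j = 1 := by
      rw [← hw2, Fintype.sum_sum_type]
      congr 1
      refine Finset.sum_congr rfl fun j _ => ?_
      by_cases ha : h x p j = 0 <;> simp [hv, ha]
    obtain ⟨ε, hεz, hε⟩ : ∃ ε : ℝ, (∀ j, 0 ≤ z j + ε * v j) ∧ 0 < ε := by
      have hev : ∀ᶠ ε : ℝ in 𝓝[>] 0, ∀ j, 0 ≤ z j + ε * v j := by
        refine eventually_all.2 fun j => ?_
        rcases (hz j).eq_or_lt with h0 | h0
        · have h0' : z j = 0 := h0.symm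
          filter_upwards [self_mem_nhdsWithin] with ε hε
          rw [h0', zero_add]
          exact mul_nonneg (le_of_lt hε) (hv0 j h0')
        · have hcont : ContinuousAt (fun ε : ℝ => z j + ε * v j) 0 := by fun_prop
          have h0' : (0 : ℝ) < z j + 0 * v j := by simpa using h0
          filter_upwards [nhdsWithin_le_nhds (hcont.eventually (lt_mem_nhds h0'))] with ε hε
          exact hε.le
      exact (hev.and self_mem_nhdsWithin).exists
    have hadd : ∀ {k : ℕ} (s t r : Fin k → ℝ), ∑ i, (s + ε • t) i * r i
        = ∑ i, s i * r i + ε * ∑ i, t i * r i := fun s t r => by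
      rw [Finset.mul_sum, ← Finset.sum_add_distrib]
      refine Finset.sum_congr rfl fun i _ => ?_
      simp only [Pi.add_apply, Pi.smul_apply, smul_eq_mul]
      ring
    have hmem : (y + ε • u, z + ε • v) ∈ MultSet f g h p x := by
      refine ⟨?_, hgz, hle, hεz, ?_⟩
      · ext1 d
        have h1 := hadd y u (fun i => G i d)
        have h2 := hadd z v (fun j => Hx j d)
        rw [hL, h1, h2, _root_.zero_apply]
        linear_combination hst0 d + ε * hv1 d
      · have hvh : ∑ j, v j * h x p j = 0 := Finset.sum_eq_zero fun j _ => by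
          by_cases ha : h x p j = 0 <;> simp [hv, ha]
        rw [hadd, hsum, hvh]
        simp
    have := hmax _ hmem
    dsimp only at this
    rw [hadd, hadd] at this
    nlinarith

end SensNLP
end

section
/- (Danskin) Let X ⊆ ℝ^n be nonempty and compact, and let f : ℝ^n × ℝ^ℓ → ℝ be continuous and such that the partial gradient ∇_p f(x, q) exists and is jointly continuous in (x, q) for q in a neighborhood of p. Define φ(q) = min_{x ∈ X} f(x, q) and Σ(q) = {x ∈ X : f(x, q) = φ(q)}. Then φ is locally Lipschitz near p and directionally differentiable at p in every direction h ∈ ℝ^ℓ, with φ'(p; h) = min_{x ∈ Σ(p)} ∇_p f(x, p)ᵀ h. -/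
/-!
Let `φ` be the minimum over `X` and `m` the minimum of the partial derivatives
`∇_p f(x,p)ᵀ h` over the minimizers at `p`. Compactness of `X` makes the first order expansion of
`f x` at `p` uniform in `x ∈ X` (`uniform_expansion`), in the strict form that compares any two
points near `p`. Hence all `f x` with `x ∈ X` share a Lipschitz constant near `p`, and so does
their minimum.

For the directional derivative, the upper bound tests `φ(p + t h)` with a minimizer at `p` at
which `m` is attained. For the lower bound, the points of `X` at which the derivative is at most
`m - ε` form a compact set without minimizers at `p`; by compactness and continuity of `φ` it
contains no minimizer at `q` for `q` near `p` (`minimizers_slope`). Expanding at a minimizer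
for `p + t h` then gives a slope of at least `m - 2 ε`.
-/

open Filter Topology Set Matrix

attribute [local instance] Classical.propDecidable

namespace SensNLP

variable {n l me mi : ℕ}
variable (f : (Fin n → ℝ) → (Fin l → ℝ) → ℝ)
  (g : (Fin n → ℝ) → (Fin l → ℝ) → Fin me → ℝ)
  (h : (Fin n → ℝ) → (Fin l → ℝ) → Fin mi → ℝ)
  (p : Fin l → ℝ) (x : Fin n → ℝ) (y : Fin me → ℝ) (z : Fin mi → ℝ)
  (hdir : Fin l → ℝ)

section Auxiliary

variable {E V : Type*} [TopologicalSpace E] [NormedAddCommGroup V]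

/-- The first order expansion at `p₀` is strict, uniformly over the compact set `X`. -/
lemma uniform_expansion [NormedSpace ℝ V] {F : E → V → ℝ} {X : Set E} (hX : IsCompact X) {p₀ : V} {N : Set V}
    (hN : N ∈ 𝓝 p₀) (hd : ∀ a : E, ∀ q ∈ N, DifferentiableAt ℝ (F a) q)
    (hc : ContinuousOn (fun aq : E × V => fderiv ℝ (F aq.1) aq.2) (Set.univ ×ˢ N))
    {ε : ℝ} (hε : 0 < ε) :
    ∃ δ > 0, ∀ a ∈ X, ∀ q ∈ Metric.ball p₀ δ, ∀ r ∈ Metric.ball p₀ δ,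
      |F a q - F a r - fderiv ℝ (F a) p₀ (q - r)| ≤ ε * ‖q - r‖ := by
  have hcont : ∀ a : E, ContinuousAt (fun aq : E × V => fderiv ℝ (F aq.1) aq.2) (a, p₀) :=
    fun a => hc.continuousAt (prod_mem_nhds univ_mem hN)
  have hclose : ∀ᶠ q in 𝓝 p₀, ∀ a ∈ X, ‖fderiv ℝ (F a) q - fderiv ℝ (F a) p₀‖ < ε := by
    apply hX.eventually_forall_of_forall_eventually
    intro a _
    have h1 : Tendsto (fun z : V × E => fderiv ℝ (F z.2) z.1 - fderiv ℝ (F z.2) p₀)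
        (𝓝 (p₀, a)) (𝓝 (fderiv ℝ (F a) p₀ - fderiv ℝ (F a) p₀)) := by
      refine Tendsto.sub ?_ ?_
      · exact (hcont a).tendsto.comp
          (Continuous.tendsto' (f := fun z : V × E => (z.2, z.1)) (by fun_prop) _ _ rfl)
      · exact (hcont a).tendsto.comp
          (Continuous.tendsto' (f := fun z : V × E => (z.2, p₀)) (by fun_prop) _ _ rfl)
    have h2 := h1.norm
    rw [sub_self, norm_zero] at h2
    exact h2.eventually_lt_const hε
  obtain ⟨δ, hδ, hball⟩ := Metric.mem_nhds_iff.1 (inter_mem hN hclose)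
  refine ⟨δ, hδ, fun a ha q hq r hr => ?_⟩
  have := (convex_ball p₀ δ).norm_image_sub_le_of_norm_fderiv_le' (𝕜 := ℝ) (f := F a)
    (φ := fderiv ℝ (F a) p₀) (C := ε) (fun z hz => hd a z (hball hz).1)
    (fun z hz => ((hball hz).2 a ha).le) hr hq
  simpa [Real.norm_eq_abs] using this

lemma sInf_image_le {F : E → ℝ} {X : Set E} (hX : IsCompact X) (hF : Continuous F) {a : E}
    (ha : a ∈ X) : sInf (F '' X) ≤ F a :=
  csInf_le (hX.image hF).bddBelow (mem_image_of_mem F ha)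

/-- If a continuous `slope` exceeds `c` at all minimizers of `F · p₀` over `X`, then it exceeds
`c` at all minimizers of `F · q` for `q` near `p₀`. -/
lemma minimizers_slope {F : E → V → ℝ} {X : Set E} (hX : IsCompact X)
    (hF : Continuous fun aq : E × V => F aq.1 aq.2) {p₀ : V} {slope : E → ℝ}
    (hs : Continuous slope) {c : ℝ}
    (hc : ∀ a ∈ X, F a p₀ = sInf ((fun b => F b p₀) '' X) → c < slope a) :
    ∀ᶠ q in 𝓝 p₀, ∀ a ∈ X, F a q = sInf ((fun b => F b q) '' X) → c < slope a := by
  have hφ : Continuous fun q => sInf ((fun b => F b q) '' X) :=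
    hX.continuous_sInf (f := fun q b => F b q)
      (hF.comp (by fun_prop : Continuous fun z : V × E => (z.2, z.1)))
  have hC : IsCompact (X ∩ {a | slope a ≤ c}) :=
    hX.inter_right (isClosed_le hs continuous_const)
  have key : ∀ᶠ q in 𝓝 p₀, ∀ a ∈ X ∩ {a | slope a ≤ c}, sInf ((fun b => F b q) '' X) < F a q := by
    apply hC.eventually_forall_of_forall_eventually
    rintro a ⟨ha, hac⟩
    have hlt : sInf ((fun b => F b p₀) '' X) < F a p₀ :=
      lt_of_le_of_ne (sInf_image_le hX (hF.comp (by fun_prop : Continuous fun b : E => (b, p₀))) ha)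
        fun h => (hc a ha h.symm).not_ge hac
    exact (hφ.comp continuous_fst).continuousAt.eventually_lt
      (hF.comp (by fun_prop : Continuous fun z : V × E => (z.2, z.1))).continuousAt hlt
  filter_upwards [key] with q hq a ha haq
  by_contra hcon
  exact (hq a ⟨ha, not_lt.1 hcon⟩).ne' haq

end Auxiliary

/-- **Danskin.** Let `X` be nonempty and compact,
`f` continuous with partial gradient `∇_p f(x,q)` existing and jointly
continuous for `q` near `p`. Then `φ(q) = min_{x ∈ X} f(x,q)` is locally
Lipschitz near `p` and directionally differentiable at `p` in every direction
`hdir`, with `φ'(p;hdir) = min_{x ∈ Σ(p)} ∇_p f(x,p)ᵀ hdir`. -/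
theorem danskin
    (X : Set (Fin n → ℝ)) (hXne : X.Nonempty) (hXcp : IsCompact X)
    (hfc : Continuous fun q : (Fin n → ℝ) × (Fin l → ℝ) => f q.1 q.2)
    (N : Set (Fin l → ℝ)) (hN : N ∈ 𝓝 p)
    (hdiff : ∀ x' : Fin n → ℝ, ∀ q ∈ N, DifferentiableAt ℝ (fun p' => f x' p') q)
    (hgradc : ContinuousOn
      (fun xq : (Fin n → ℝ) × (Fin l → ℝ) => fderiv ℝ (fun p' => f xq.1 p') xq.2)
      (Set.univ ×ˢ N)) :
    -- φ is locally Lipschitz near p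
    (∃ K : NNReal, ∃ W ∈ 𝓝 p,
      LipschitzOnWith K (fun q => sInf ((fun x' => f x' q) '' X)) W) ∧
    -- directional differentiability together with Danskin's formula
    ∀ hdir : Fin l → ℝ,
      Tendsto
        (fun t : ℝ =>
          (sInf ((fun x' => f x' (p + t • hdir)) '' X)
            - sInf ((fun x' => f x' p) '' X)) / t)
        (𝓝[>] (0 : ℝ))
        (𝓝 (sInf ((fun x' => fderiv ℝ (fun p' => f x' p') p hdir) ''
          {x' ∈ X | f x' p = sInf ((fun x'' => f x'' p) '' X)}))) := by
  have hfx : ∀ q, Continuous fun x' => f x' q := fun q =>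
    hfc.comp (by fun_prop : Continuous fun a : Fin n → ℝ => (a, q))
  have hmin : ∀ q, ∃ a ∈ X, sInf ((fun x' => f x' q) '' X) = f a q := fun q =>
    hXcp.exists_sInf_image_eq hXne (hfx q).continuousOn
  have hle : ∀ q, ∀ a ∈ X, sInf ((fun x' => f x' q) '' X) ≤ f a q := fun q a ha =>
    sInf_image_le hXcp (hfx q) ha
  have hG : Continuous fun a => fderiv ℝ (fun p' => f a p') p :=
    continuous_iff_continuousAt.2 fun a =>
      (hgradc.continuousAt (prod_mem_nhds univ_mem hN)).comp (f := fun b : Fin n → ℝ => (b, p))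
        (x := a) (by fun_prop)
  constructor
  · obtain ⟨M, hM⟩ := hXcp.exists_bound_of_continuousOn hG.continuousOn
    obtain ⟨δ, hδ, hexp⟩ := uniform_expansion hXcp hN hdiff hgradc one_pos
    refine ⟨(M + 1).toNNReal, Metric.ball p δ, Metric.ball_mem_nhds p hδ, ?_⟩
    apply LipschitzOnWith.of_le_add_mul
    intro q hq r hr
    obtain ⟨a, ha, har⟩ := hmin r
    rw [har, dist_eq_norm]
    refine (hle q a ha).trans ?_
    have h1 := (abs_le.1 (hexp a ha q hq r hr)).2
    have h2 : fderiv ℝ (fun p' => f a p') p (q - r) ≤ M * ‖q - r‖ :=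
      (le_abs_self _).trans (ContinuousLinearMap.le_of_opNorm_le _ (hM a ha) _)
    have h3 := mul_le_mul_of_nonneg_right (Real.le_coe_toNNReal (M + 1)) (norm_nonneg (q - r))
    linarith
  · intro hdir
    have hslope : Continuous fun a => fderiv ℝ (fun p' => f a p') p hdir :=
      hG.clm_apply continuous_const
    have hSc : IsCompact {x' ∈ X | f x' p = sInf ((fun x'' => f x'' p) '' X)} :=
      hXcp.inter_right (isClosed_eq (hfx p) continuous_const)
    have hSne : {x' ∈ X | f x' p = sInf ((fun x'' => f x'' p) '' X)}.Nonempty := by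
      obtain ⟨a, ha, hap⟩ := hmin p
      exact ⟨a, ha, hap.symm⟩
    obtain ⟨a₀, ⟨ha₀X, ha₀⟩, hm⟩ := hSc.exists_sInf_image_eq hSne hslope.continuousOn
    have hmle : ∀ a ∈ X, f a p = sInf ((fun x'' => f x'' p) '' X) →
        sInf ((fun x' => fderiv ℝ (fun p' => f x' p') p hdir) ''
          {x' ∈ X | f x' p = sInf ((fun x'' => f x'' p) '' X)})
          ≤ fderiv ℝ (fun p' => f a p') p hdir := fun a ha hap =>
      sInf_image_le hSc hslope ⟨ha, hap⟩
    set m := sInf ((fun x' => fderiv ℝ (fun p' => f x' p') p hdir) ''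
          {x' ∈ X | f x' p = sInf ((fun x'' => f x'' p) '' X)})
    clear_value m
    rw [Metric.tendsto_nhds]
    intro ε hε
    -- The expansion is accurate to `η * ‖t • hdir‖ < (ε / 2) * t`.
    set η := ε / 2 / (‖hdir‖ + 1) with hη
    have hηpos : 0 < η := by positivity
    have hηh : η * ‖hdir‖ < ε / 2 := by
      have : η * (‖hdir‖ + 1) = ε / 2 := by rw [hη]; field_simp
      linarith
    obtain ⟨δ, hδ, hexp⟩ := uniform_expansion hXcp hN hdiff hgradc hηpos
    have hnear := minimizers_slope hXcp hfc hslope (c := m - ε / 2)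
      (fun a ha hap => by have := hmle a ha hap; linarith)
    have hline : Tendsto (fun t : ℝ => p + t • hdir) (𝓝[>] 0) (𝓝 p) :=
      (Continuous.tendsto' (by fun_prop) _ _ (by simp)).mono_left nhdsWithin_le_nhds
    filter_upwards [hline.eventually hnear, hline.eventually (Metric.ball_mem_nhds p hδ),
      self_mem_nhdsWithin] with t hmint htball htpos
    have ht : (0 : ℝ) < t := htpos
    have hexp' : ∀ a ∈ X,
        |f a (p + t • hdir) - f a p - t * fderiv ℝ (fun p' => f a p') p hdir|
          ≤ t * (η * ‖hdir‖) := by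
      intro a ha
      have := hexp a ha _ htball p (Metric.mem_ball_self hδ)
      rw [add_sub_cancel_left, map_smul, norm_smul, Real.norm_of_nonneg ht.le, smul_eq_mul] at this
      linarith
    have herr : t * (η * ‖hdir‖) < t * (ε / 2) := mul_lt_mul_of_pos_left hηh ht
    rw [Real.dist_eq, abs_sub_lt_iff]
    constructor
    · rw [sub_lt_iff_lt_add, div_lt_iff₀ ht]
      have h1 := (abs_le.1 (hexp' a₀ ha₀X)).2
      have h2 := hle (p + t • hdir) a₀ ha₀X
      rw [← hm] at h1
      nlinarith
    · rw [sub_lt_comm, lt_div_iff₀ ht]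
      obtain ⟨b, hb, hbt⟩ := hmin (p + t • hdir)
      have h1 := (abs_le.1 (hexp' b hb)).1
      have h2 := hle p b hb
      have h3 := mul_lt_mul_of_pos_left (hmint b hb hbt.symm) ht
      rw [hbt]
      nlinarith

end SensNLP
end

section
/- (Hogan) Let M ⊆ ℝ^n be a closed convex set, and let f : ℝ^n × ℝ^ℓ → ℝ and h : ℝ^n × ℝ^ℓ → ℝ^{m_i} be such that f(·, q) and each h_i(·, q) are convex on M for every q, and f and h are continuously differentiable on M × N for a neighborhood N of p. Consider φ(q) = inf{f(x, q) : x ∈ M, h(x, q) ≤ 0}, with solution set Σ(q) = {x ∈ M : h(x,q) ≤ 0, f(x,q) = φ(q)}, and for x ∈ Σ(q) let M_q(x) denote the set of multipliers z ∈ ℝ^{m_i} with z ≥ 0, zᵀ h(x,q) = 0, and x minimizing L(·, z, q) = f(·, q) + zᵀ h(·, q) over M. Suppose (i) Σ(p) is nonempty and bounded, (ii) φ(p) is finite, and (iii) there exists x̂ ∈ M with h(x̂, p) < 0 (Slater's condition). Then φ is directionally differentiable at p in every direction h ∈ ℝ^ℓ, with φ'(p; h) = min_{x ∈ Σ(p)}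 max_{z ∈ M_p(x)} ∇_p L(x, z, p)ᵀ h. -/
/-! The limit is computed along an arbitrary ultrafilter of step sizes `t ↓ 0`, which replaces the
extraction of convergent subsequences.

Convexity and boundedness of the solution set at `p` force near-optimal feasible points of the
perturbed problems into a fixed ball (`exists_localization`), so perturbed solutions `x t` exist
(`exists_solution`); Slater's condition gives perturbed multipliers `z t` (`exists_multiplier`),
uniformly bounded (`multiplier_le`). Let `x₀`, `z₀` be their limits. They are a solution and a
multiplier at `p`, where the multiplier set does not depend on the solution
(`mem_hoganMult_iff`). Weak duality at `p` and at `p + t d` bounds the difference quotient of the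
value function below by that of `L(x t, z, ·)`, for every multiplier `z` at `p`, and above by that
of `L(x, z t, ·)`, for every solution `x` at `p`. Since the first-order expansion in the parameter
is locally uniform in `x` (`exists_uniform_partial`), these bounds converge to the derivatives in
direction `d` of `L(x₀, z, ·)` and `L(x, z₀, ·)`. Hence the quotient converges to the derivative of
`L(x₀, z₀, ·)`, and `(x₀, z₀)` is a saddle point of the derivative (`exists_saddle`), whose value
is the min-max. -/

open Filter Topology Set Matrix

attribute [local instance] Classical.propDecidable

namespace SensNLP

variable {n l me mi : ℕ}
variable (f : (Fin n → ℝ) → (Fin l → ℝ) → ℝ)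
  (g : (Fin n → ℝ) → (Fin l → ℝ) → Fin me → ℝ)
  (h : (Fin n → ℝ) → (Fin l → ℝ) → Fin mi → ℝ)
  (p : Fin l → ℝ) (x : Fin n → ℝ) (y : Fin me → ℝ) (z : Fin mi → ℝ)
  (hdir : Fin l → ℝ)

/-- Feasible set of Hogan's problem: `x ∈ M` with `h(x,q) ≤ 0`. -/
def hoganFeas (M : Set (Fin n → ℝ)) (q : Fin l → ℝ) : Set (Fin n → ℝ) :=
  {x' ∈ M | h x' q ≤ 0}

/-- Value function of Hogan's problem. -/
noncomputable def hoganVal (M : Set (Fin n → ℝ)) (q : Fin l → ℝ) : ℝ :=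
  sInf ((fun x' => f x' q) '' hoganFeas h M q)

/-- Solution set of Hogan's problem. -/
def hoganSol (M : Set (Fin n → ℝ)) (q : Fin l → ℝ) : Set (Fin n → ℝ) :=
  {x' ∈ hoganFeas h M q | f x' q = hoganVal f h M q}

/-- Multiplier set of Hogan's problem at a solution `x'`: nonnegative `z`,
complementary, such that `x'` minimizes the Lagrangian `L(·,z,q)` over `M`. -/
def hoganMult (M : Set (Fin n → ℝ)) (q : Fin l → ℝ) (x' : Fin n → ℝ) :
    Set (Fin mi → ℝ) :=
  {z' | 0 ≤ z' ∧ (∑ j, z' j * h x' q j) = 0 ∧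
    ∀ x'' ∈ M, f x' q + ∑ j, z' j * h x' q j ≤ f x'' q + ∑ j, z' j * h x'' q j}

/-! ### Consequences of continuous differentiability on `M ×ˢ N` -/

/-- A function that is `C¹` on `M ×ˢ N` has, at each `x₀ ∈ M`, a partial derivative in the
parameter at `p`, and its first-order expansion in the parameter is uniform over the points of `M`
near `x₀`. As `M` may have empty interior, the derivative of the joint function need not be unique,
but its restriction to the parameter directions is. -/
lemma exists_uniform_partial {M : Set (Fin n → ℝ)} (hM : Convex ℝ M) {N : Set (Fin l → ℝ)}
    {p : Fin l → ℝ} (hN : N ∈ 𝓝 p) {F : (Fin n → ℝ) → (Fin l → ℝ) → ℝ}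
    (hF : ContDiffOn ℝ 1 (fun q : (Fin n → ℝ) × (Fin l → ℝ) => F q.1 q.2) (M ×ˢ N))
    {x₀ : Fin n → ℝ} (hx₀ : x₀ ∈ M) :
    ∃ L : (Fin l → ℝ) →L[ℝ] ℝ, HasFDerivAt (F x₀) L p ∧
      ∀ ε > 0, ∀ᶠ y : (Fin n → ℝ) × (Fin l → ℝ) in 𝓝 (x₀, p), y.1 ∈ M →
        |F y.1 y.2 - F y.1 p - L (y.2 - p)| ≤ ε * ‖y.2 - p‖ := by
  have hmem : (x₀, p) ∈ M ×ˢ N := ⟨hx₀, mem_of_mem_nhds hN⟩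
  have h1 := hF (x₀, p) hmem
  rw [show (1 : WithTop ℕ∞) = 0 + 1 by simp,
    contDiffWithinAt_succ_iff_hasFDerivWithinAt (by simp)] at h1
  obtain ⟨u, hu, -, f', hf', hc⟩ := h1
  rw [insert_eq_of_mem hmem] at hu
  have hcont : ContinuousWithinAt f' u (x₀, p) := hc.continuousWithinAt
  have hxu : (x₀, p) ∈ u := mem_of_mem_nhdsWithin hmem hu
  set L : (Fin l → ℝ) →L[ℝ] ℝ := (f' (x₀, p)).comp (ContinuousLinearMap.inr ℝ _ _) with hL
  have key : ∀ ε > 0, ∀ᶠ y : (Fin n → ℝ) × (Fin l → ℝ) in 𝓝 (x₀, p), y.1 ∈ M →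
        |F y.1 y.2 - F y.1 p - L (y.2 - p)| ≤ ε * ‖y.2 - p‖ := by
    intro ε hε
    have h2 : ∀ᶠ y in 𝓝[u] (x₀, p), ‖f' y - f' (x₀, p)‖ ≤ ε := by
      have := Metric.tendsto_nhds.1 hcont ε hε
      filter_upwards [this] with y hy
      rw [← dist_eq_norm]; exact hy.le
    rw [eventually_nhdsWithin_iff] at h2
    rw [mem_nhdsWithin_iff_eventually] at hu
    have hNp : ∀ᶠ y : (Fin n → ℝ) × (Fin l → ℝ) in 𝓝 (x₀, p), y.2 ∈ N :=
      (continuous_snd.tendsto (x₀, p)) hN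
    obtain ⟨r, hr, hball⟩ := Metric.eventually_nhds_iff_ball.1 (h2.and (hu.and hNp))
    have hprod : Metric.ball (x₀, p) r = Metric.ball x₀ r ×ˢ Metric.ball p r :=
      (ball_prod_same x₀ p r).symm
    have hsu : ((M ∩ Metric.ball x₀ r) ×ˢ Metric.ball p r) ⊆ u := by
      rintro ⟨a, b⟩ ⟨⟨haM, ha⟩, hb⟩
      have hab := hball (a, b) (by rw [hprod]; exact ⟨ha, hb⟩)
      exact hab.2.1 ⟨haM, hab.2.2⟩
    have hconv : Convex ℝ ((M ∩ Metric.ball x₀ r) ×ˢ Metric.ball p r) :=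
      (hM.inter (convex_ball _ _)).prod (convex_ball _ _)
    filter_upwards [Metric.ball_mem_nhds (x₀, p) hr] with y hy hyM
    rw [hprod] at hy
    have := hconv.norm_image_sub_le_of_norm_hasFDerivWithin_le' (𝕜 := ℝ)
      (f := fun q : (Fin n → ℝ) × (Fin l → ℝ) => F q.1 q.2) (f' := f') (φ := f' (x₀, p)) (C := ε)
      (x := (y.1, p)) (y := y)
      (fun w hw => (hf' w (hsu hw)).mono hsu)
      (fun w hw => (hball w (by rw [hprod]; exact ⟨hw.1.2, hw.2⟩)).1 (hsu hw))
      ⟨⟨hyM, hy.1⟩, Metric.mem_ball_self hr⟩ ⟨⟨hyM, hy.1⟩, hy.2⟩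
    have e : y - (y.1, p) = (0, y.2 - p) := by ext <;> simp
    rw [e] at this
    have en : ‖((0 : Fin n → ℝ), y.2 - p)‖ = ‖y.2 - p‖ := by simp [Prod.norm_def]
    rw [en] at this
    simpa [hL] using this
  refine ⟨L, ?_, key⟩
  rw [hasFDerivAt_iff_isLittleO, Asymptotics.isLittleO_iff]
  intro ε hε
  have ht : Tendsto (fun q : Fin l → ℝ => (x₀, q)) (𝓝 p) (𝓝 (x₀, p)) :=
    (Continuous.prodMk_right x₀).tendsto p
  filter_upwards [ht.eventually (key ε hε)] with q hq
  exact hq hx₀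

lemma tendsto_partial_quotient {M : Set (Fin n → ℝ)} (hM : Convex ℝ M) {N : Set (Fin l → ℝ)}
    {p : Fin l → ℝ} (hN : N ∈ 𝓝 p) {F : (Fin n → ℝ) → (Fin l → ℝ) → ℝ}
    (hF : ContDiffOn ℝ 1 (fun q : (Fin n → ℝ) × (Fin l → ℝ) => F q.1 q.2) (M ×ˢ N))
    {x₀ : Fin n → ℝ} (hx₀ : x₀ ∈ M) {U : Filter ℝ} (hU : U ≤ 𝓝[>] 0) {X : ℝ → Fin n → ℝ}
    (hXM : ∀ᶠ t in U, X t ∈ M) (hX : Tendsto X U (𝓝 x₀)) (d : Fin l → ℝ) :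
    Tendsto (fun t => (F (X t) (p + t • d) - F (X t) p) / t) U (𝓝 (fderiv ℝ (F x₀) p d)) := by
  obtain ⟨L, hL, hunif⟩ := exists_uniform_partial hM hN hF hx₀
  rw [hL.fderiv, Metric.tendsto_nhds]
  intro ε hε
  have hε' : 0 < ε / (‖d‖ + 1) := by positivity
  have hpos : ∀ᶠ t in U, (0 : ℝ) < t := hU self_mem_nhdsWithin
  have hQ : Tendsto (fun t : ℝ => p + t • d) U (𝓝 p) := by
    have : Tendsto (fun t : ℝ => p + t • d) (𝓝 0) (𝓝 (p + (0 : ℝ) • d)) :=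
      (by fun_prop : Continuous fun t : ℝ => p + t • d).tendsto 0
    rw [zero_smul, add_zero] at this
    exact this.mono_left (hU.trans nhdsWithin_le_nhds)
  filter_upwards [hpos, hXM, (hX.prodMk_nhds hQ).eventually (hunif _ hε')] with t ht hXt h1
  have h2 := h1 hXt
  simp only [add_sub_cancel_left, map_smul, smul_eq_mul, norm_smul, Real.norm_eq_abs,
    abs_of_pos ht] at h2
  rw [Real.dist_eq, show (F (X t) (p + t • d) - F (X t) p) / t - L d
    = (F (X t) (p + t • d) - F (X t) p - t * L d) / t by field_simp, abs_div, abs_of_pos ht,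
    div_lt_iff₀ ht]
  refine h2.trans_lt ?_
  rw [div_mul_eq_mul_div, div_lt_iff₀ (by positivity)]
  have := mul_pos hε ht
  nlinarith [norm_nonneg d]

lemma tendsto_joint {α : Type*} {M : Set (Fin n → ℝ)} {N : Set (Fin l → ℝ)}
    {p : Fin l → ℝ} (hN : N ∈ 𝓝 p) {F : (Fin n → ℝ) → (Fin l → ℝ) → ℝ}
    (hF : ContDiffOn ℝ 1 (fun q : (Fin n → ℝ) × (Fin l → ℝ) => F q.1 q.2) (M ×ˢ N))
    {x₀ : Fin n → ℝ} (hx₀ : x₀ ∈ M) {U : Filter α} {X : α → Fin n → ℝ} {Q : α → Fin l → ℝ}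
    (hXM : ∀ᶠ t in U, X t ∈ M) (hX : Tendsto X U (𝓝 x₀)) (hQ : Tendsto Q U (𝓝 p)) :
    Tendsto (fun t => F (X t) (Q t)) U (𝓝 (F x₀ p)) := by
  have hc := hF.continuousOn (x₀, p) ⟨hx₀, mem_of_mem_nhds hN⟩
  refine Tendsto.comp (f := fun t => (X t, Q t)) hc
    (tendsto_nhdsWithin_iff.2 ⟨hX.prodMk_nhds hQ, ?_⟩)
  filter_upwards [hXM, hQ hN] with t h1 h2
  exact ⟨h1, h2⟩

/-! ### Multipliers under Slater's condition -/

/-- Strong duality: under Slater's condition, a lower bound `v` on the feasible values bounds the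
Lagrangian of some multiplier below on all of `M`. The multiplier comes from separating the origin from the
open convex set of pairs lying strictly above some `(b x, a x - v)`, `x ∈ M`. -/
lemma exists_multiplier {M : Set (Fin n → ℝ)} {a : (Fin n → ℝ) → ℝ}
    {b : (Fin n → ℝ) → Fin mi → ℝ} (ha : ConvexOn ℝ M a)
    (hb : ∀ j, ConvexOn ℝ M (fun x => b x j)) {v : ℝ}
    (hv : ∀ x ∈ M, b x ≤ 0 → v ≤ a x) {xh : Fin n → ℝ} (hxh : xh ∈ M) (hs : ∀ j, b xh j < 0) :
    ∃ z : Fin mi → ℝ, 0 ≤ z ∧ ∀ x ∈ M, v ≤ a x + ∑ j, z j * b x j := by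
  set A : Set ((Fin mi → ℝ) × ℝ) := ⋃ x ∈ M, {w | (∀ j, b x j < w.1 j) ∧ a x - v < w.2} with hA
  have hmemA : ∀ w, w ∈ A ↔ ∃ x ∈ M, (∀ j, b x j < w.1 j) ∧ a x - v < w.2 := by
    intro w; simp only [hA, mem_iUnion, exists_prop, mem_ofPred_eq]
  have hopen : IsOpen A := by
    refine isOpen_biUnion fun x _ => ?_
    simp only [ofPred_and, ofPred_forall]
    refine (isOpen_iInter_of_finite fun j => ?_).inter ?_
    · exact isOpen_lt continuous_const (by fun_prop)
    · exact isOpen_lt continuous_const (by fun_prop)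
  have hconv : Convex ℝ A := by
    intro w hw w' hw' α β hα hβ hαβ
    obtain ⟨x, hx, h1, h2⟩ := (hmemA w).1 hw
    obtain ⟨x', hx', h1', h2'⟩ := (hmemA w').1 hw'
    have comb : ∀ {s t s' t' : ℝ}, s < s' → t < t' → α * s + β * t < α * s' + β * t' := by
      intro s t s' t' hst hst'
      rcases hα.eq_or_lt with h0 | h0
      · obtain rfl : β = 1 := by linarith
        subst h0; linarith
      · nlinarith [mul_lt_mul_of_pos_left hst h0, mul_le_mul_of_nonneg_left hst'.le hβ]
    refine (hmemA _).2 ⟨α • x + β • x', ha.1 hx hx' hα hβ hαβ, fun j => ?_, ?_⟩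
    · have := (hb j).2 hx hx' hα hβ hαβ
      have h3 := comb (h1 j) (h1' j)
      simp only [smul_eq_mul] at this
      simp only [Prod.fst_add, Prod.smul_fst, Pi.add_apply, Pi.smul_apply, smul_eq_mul]
      linarith
    · have := ha.2 hx hx' hα hβ hαβ
      have h3 := comb h2 h2'
      simp only [smul_eq_mul] at this
      simp only [Prod.snd_add, Prod.smul_snd, smul_eq_mul]
      have h4 : α * v + β * v = v := by rw [← add_mul, hαβ, one_mul]
      linarith
  have h0A : (0 : (Fin mi → ℝ) × ℝ) ∉ A := by
    intro h0
    obtain ⟨x, hx, h1, h2⟩ := (hmemA _).1 h0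
    have := hv x hx (fun j => (h1 j).le)
    simp only [Prod.snd_zero] at h2
    linarith
  obtain ⟨φ, hφ⟩ := geometric_hahn_banach_point_open hconv hopen h0A
  rw [map_zero] at hφ
  have hrep : ∀ (u : Fin mi → ℝ) (r : ℝ),
      φ (u, r) = ∑ j, φ (Pi.single j 1, 0) * u j + φ (0, 1) * r := by
    intro u r
    have e : ((u, r) : (Fin mi → ℝ) × ℝ)
        = ∑ j, u j • ((Pi.single j 1, 0) : (Fin mi → ℝ) × ℝ) + r • ((0, 1) : (Fin mi → ℝ) × ℝ) := by
      refine Prod.ext ?_ ?_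
      · ext k
        simp [Prod.fst_sum, Finset.sum_apply, Pi.single_apply]
      · simp [Prod.snd_sum]
    rw [e, map_add, map_sum, map_smul, smul_eq_mul]
    simp only [map_smul, smul_eq_mul]
    congr 1
    · exact Finset.sum_congr rfl fun j _ => mul_comm _ _
    · ring
  set s : ℝ := φ (0, 1) with hsdef
  -- `A` is stable under adding nonnegative vectors, so `φ` is nonnegative on them.
  have hnonneg : ∀ w : (Fin mi → ℝ) × ℝ, 0 ≤ w → 0 ≤ φ w := by
    intro w hw
    by_contra hneg
    push Not at hneg
    set w₀ : (Fin mi → ℝ) × ℝ := (fun j => b xh j + 1, a xh - v + 1) with hw₀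
    have hk : ∀ k : ℝ, 0 ≤ k → 0 < φ w₀ + k * φ w := by
      intro k hk
      have : w₀ + k • w ∈ A := by
        refine (hmemA _).2 ⟨xh, hxh, fun j => ?_, ?_⟩
        · have : 0 ≤ k * w.1 j := mul_nonneg hk (hw.1 j)
          simp only [hw₀, Prod.fst_add, Prod.smul_fst, Pi.add_apply, Pi.smul_apply, smul_eq_mul]
          linarith
        · have : 0 ≤ k * w.2 := mul_nonneg hk hw.2
          simp only [hw₀, Prod.snd_add, Prod.smul_snd, smul_eq_mul]
          linarith
      have := hφ _ this
      rwa [map_add, map_smul, smul_eq_mul] at this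
    have h1 := hk 0 le_rfl
    have h2 := hk (φ w₀ / (-φ w)) (div_nonneg (by linarith) (by linarith))
    have h3 : φ w₀ / (-φ w) * φ w = -φ w₀ := by
      have : φ w ≠ 0 := hneg.ne
      field_simp
    linarith
  have hs0 : 0 < s := by
    refine lt_of_le_of_ne (hnonneg _ ⟨le_rfl, zero_le_one⟩) fun h0 => ?_
    -- By Slater's condition `A` contains a point `(0, r)`, on which `φ` is positive.
    have hm : ((0, a xh - v + 1) : (Fin mi → ℝ) × ℝ) ∈ A :=
      (hmemA _).2 ⟨xh, hxh, hs, by simp⟩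
    have := hφ _ hm
    rw [hrep, ← h0] at this
    simp at this
  refine ⟨fun j => φ (Pi.single j 1, 0) / s, fun j => div_nonneg (hnonneg _ ⟨?_, le_rfl⟩) hs0.le,
    fun x hx => ?_⟩
  · exact Pi.single_nonneg.2 zero_le_one
  · have hε : ∀ ε > 0, 0 < φ (b x, a x - v) + ε * φ (fun _ => 1, 1) := by
      intro ε hε
      have hm : ((b x, a x - v) : (Fin mi → ℝ) × ℝ) + ε • ((fun _ => 1), 1) ∈ A :=
        (hmemA _).2 ⟨x, hx, fun j => by simpa using hε, by simpa using hε⟩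
      have := hφ _ hm
      rwa [map_add, map_smul, smul_eq_mul] at this
    have hlim : Tendsto (fun ε : ℝ => φ (b x, a x - v) + ε * φ (fun _ => 1, 1)) (𝓝[>] 0)
        (𝓝 (φ (b x, a x - v) + 0 * φ (fun _ => 1, 1))) :=
      ((by fun_prop : Continuous fun ε : ℝ =>
        φ (b x, a x - v) + ε * φ (fun _ => 1, 1)).tendsto 0).mono_left nhdsWithin_le_nhds
    have h1 : 0 ≤ φ (b x, a x - v) + 0 * φ (fun _ => 1, 1) :=
      ge_of_tendsto hlim (eventually_nhdsWithin_of_forall fun ε h => (hε ε h).le)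
    rw [zero_mul, add_zero, hrep] at h1
    have h2 : ∑ j, φ (Pi.single j 1, 0) / s * b x j
        = (∑ j, φ (Pi.single j 1, 0) * b x j) / s := by
      rw [Finset.sum_div]
      exact Finset.sum_congr rfl fun j _ => by ring
    rw [h2]
    have h3 : 0 ≤ (∑ j, φ (Pi.single j 1, 0) * b x j) / s + (a x - v) := by
      have : (∑ j, φ (Pi.single j 1, 0) * b x j) / s + (a x - v)
        = (∑ j, φ (Pi.single j 1, 0) * b x j + s * (a x - v)) / s := by field_simp
      rw [this]; exact div_nonneg h1 hs0.le
    linarith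

/-- A multiplier is bounded in terms of the slack `η` at a Slater point. -/
lemma multiplier_le {a : ℝ} {b z : Fin mi → ℝ} {v η : ℝ} (hη : 0 < η) (hb : ∀ j, b j ≤ -η)
    (hz : 0 ≤ z) (hv : v ≤ a + ∑ j, z j * b j) (j : Fin mi) : z j ≤ (a - v) / η := by
  rw [le_div_iff₀ hη]
  have h1 : ∑ k, z k * b k ≤ z j * b j := by
    rw [← Finset.add_sum_erase _ _ (Finset.mem_univ j)]
    have : ∑ k ∈ Finset.univ.erase j, z k * b k ≤ 0 :=
      Finset.sum_nonpos fun k _ =>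
        mul_nonpos_of_nonneg_of_nonpos (hz k) ((hb k).trans (by linarith))
    linarith
  have h2 : z j * b j ≤ z j * -η := mul_le_mul_of_nonneg_left (hb j) (hz j)
  linarith

/-! ### Solutions of the perturbed problems -/

/-- If the feasible points at `p` of value at most `v` stay inside the open ball of radius `R` about
one of them, `c`, then for `q` near `p` all feasible points of value at most `v + δ` stay within
distance `R` of `c`. Otherwise the segments from `c` to far away such points cross the sphere of
radius `R`, and by convexity a limit of the crossing points is feasible at `p` with value at
most `v`. -/
lemma exists_localization {f : (Fin n → ℝ) → (Fin l → ℝ) → ℝ}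
    {h : (Fin n → ℝ) → (Fin l → ℝ) → Fin mi → ℝ} {p : Fin l → ℝ}
    {M : Set (Fin n → ℝ)} (hMc : IsClosed M) (hM : Convex ℝ M)
    (hfconv : ∀ q : Fin l → ℝ, ConvexOn ℝ M (fun x => f x q))
    (hhconv : ∀ (q : Fin l → ℝ) (j : Fin mi), ConvexOn ℝ M (fun x => h x q j))
    {N : Set (Fin l → ℝ)} (hN : N ∈ 𝓝 p)
    (hfd : ContDiffOn ℝ 1 (fun q : (Fin n → ℝ) × (Fin l → ℝ) => f q.1 q.2) (M ×ˢ N))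
    (hhd : ∀ j : Fin mi,
      ContDiffOn ℝ 1 (fun q : (Fin n → ℝ) × (Fin l → ℝ) => h q.1 q.2 j) (M ×ˢ N))
    {c : Fin n → ℝ} {v : ℝ} (hc : c ∈ M) (hhc : h c p ≤ 0) (hfc : f c p ≤ v)
    {R : ℝ} (hR0 : 0 < R) (hR : ∀ x ∈ M, h x p ≤ 0 → f x p ≤ v → dist x c < R) :
    ∃ δ > 0, ∀ᶠ q in 𝓝 p, ∀ x ∈ M, h x q ≤ 0 → f x q ≤ v + δ → dist x c ≤ R := by
  suffices H : ∀ᶠ y : (Fin l → ℝ) × ℝ in 𝓝 p ×ˢ 𝓝[>] 0,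
      ∀ x ∈ M, h x y.1 ≤ 0 → f x y.1 ≤ v + y.2 → dist x c ≤ R by
    obtain ⟨pa, hpa, pb, hpb, hab⟩ := eventually_prod_iff.1 H
    obtain ⟨δ, hδ, hδ0⟩ := (hpb.and self_mem_nhdsWithin).exists
    exact ⟨δ, hδ0, hpa.mono fun q hq => hab hq hδ⟩
  by_contra hcon
  rw [Filter.not_eventually, Filter.frequently_iff_neBot] at hcon
  set U := Ultrafilter.of ((𝓝 p ×ˢ 𝓝[>] (0 : ℝ)) ⊓ 𝓟 {y : (Fin l → ℝ) × ℝ |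
    ¬ ∀ x ∈ M, h x y.1 ≤ 0 → f x y.1 ≤ v + y.2 → dist x c ≤ R})
  have hUle := Ultrafilter.of_le ((𝓝 p ×ˢ 𝓝[>] (0 : ℝ)) ⊓ 𝓟 {y : (Fin l → ℝ) × ℝ |
    ¬ ∀ x ∈ M, h x y.1 ≤ 0 → f x y.1 ≤ v + y.2 → dist x c ≤ R})
  have hU1 : (U : Filter _) ≤ 𝓝 p ×ˢ 𝓝[>] (0 : ℝ) := hUle.trans inf_le_left
  have hQ : Tendsto Prod.fst (U : Filter ((Fin l → ℝ) × ℝ)) (𝓝 p) := tendsto_fst.mono_left hU1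
  have hδ : Tendsto Prod.snd (U : Filter ((Fin l → ℝ) × ℝ)) (𝓝 0) :=
    (tendsto_snd.mono_left hU1).mono_right nhdsWithin_le_nhds
  have hbad : ∀ᶠ y in (U : Filter ((Fin l → ℝ) × ℝ)), ∃ w, w ∈ M ∧ dist w c = R ∧
      (∀ j, h w y.1 j ≤ max (h c y.1 j) 0) ∧ f w y.1 ≤ max (f c y.1) (v + y.2) := by
    have : ∀ᶠ y in (U : Filter ((Fin l → ℝ) × ℝ)),
      ¬ ∀ x ∈ M, h x y.1 ≤ 0 → f x y.1 ≤ v + y.2 → dist x c ≤ R :=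
      (hUle.trans inf_le_right) (mem_principal_self _)
    filter_upwards [this] with y hy
    push Not at hy
    obtain ⟨x, hx, hhx, hfx, hd⟩ := hy
    have hd0 : 0 < dist x c := hR0.trans hd
    have hθ : R / dist x c ∈ Icc (0 : ℝ) 1 :=
      ⟨by positivity, (div_le_one hd0).2 hd.le⟩
    have hseg : AffineMap.lineMap c x (R / dist x c) ∈ segment ℝ c x := by
      rw [segment_eq_image_lineMap]; exact mem_image_of_mem _ hθ
    refine ⟨AffineMap.lineMap c x (R / dist x c), hM.segment_subset hc hx hseg, ?_, fun j => ?_, ?_⟩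
    · rw [dist_lineMap_left, Real.norm_of_nonneg hθ.1, dist_comm c x]
      field_simp
    · exact ((hhconv y.1 j).le_max_of_mem_segment hc hx hseg).trans (max_le_max le_rfl (hhx j))
    · exact ((hfconv y.1).le_max_of_mem_segment hc hx hseg).trans (max_le_max le_rfl hfx)
  choose! W hW using fun (y : (Fin l → ℝ) × ℝ) (hy : ∃ w, w ∈ M ∧ dist w c = R ∧
      (∀ j, h w y.1 j ≤ max (h c y.1 j) 0) ∧ f w y.1 ≤ max (f c y.1) (v + y.2)) => hy
  have hWev := hbad.mono hW
  have hK : IsCompact (M ∩ Metric.sphere c R) := (isCompact_sphere c R).inter_left hMc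
  obtain ⟨w₀, ⟨hw₀M, hw₀R⟩, hle⟩ := hK.ultrafilter_le_nhds (U.map W)
    (by
      refine tendsto_principal.2 ?_
      filter_upwards [hWev] with y hy
      exact ⟨hy.1, hy.2.1⟩)
  have hWt : Tendsto W U (𝓝 w₀) := hle
  have hWM : ∀ᶠ y in (U : Filter ((Fin l → ℝ) × ℝ)), W y ∈ M := hWev.mono fun y hy => hy.1
  have hcM : ∀ᶠ _ in (U : Filter ((Fin l → ℝ) × ℝ)), c ∈ M := Eventually.of_forall fun _ => hc
  have hlt := hR w₀ hw₀M (fun j => ?_) ?_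
  · exact hlt.ne hw₀R
  · have h1 := tendsto_joint (F := fun x q => h x q j) hN (hhd j) hw₀M hWM hWt hQ
    have h2 := tendsto_joint (F := fun x q => h x q j) hN (hhd j) hc hcM tendsto_const_nhds hQ
    have := le_of_tendsto_of_tendsto h1 (h2.max tendsto_const_nhds)
      (hWev.mono fun y hy => hy.2.2.1 j)
    exact this.trans (max_le (hhc j) le_rfl)
  · have h1 := tendsto_joint hN hfd hw₀M hWM hWt hQ
    have h2 := tendsto_joint hN hfd hc hcM tendsto_const_nhds hQ
    have := le_of_tendsto_of_tendsto h1 (h2.max (hδ.const_add v))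
      (hWev.mono fun y hy => hy.2.2.2)
    refine this.trans (max_le hfc (by simp))

lemma exists_strictly_feasible {a : (Fin n → ℝ) → ℝ} {b : (Fin n → ℝ) → Fin mi → ℝ}
    {M : Set (Fin n → ℝ)} (ha : ConvexOn ℝ M a) (hb : ∀ j, ConvexOn ℝ M (fun x => b x j))
    {c xh : Fin n → ℝ} (hc : c ∈ M) (hbc : b c ≤ 0) (hxh : xh ∈ M) (hs : ∀ j, b xh j < 0)
    {δ : ℝ} (hδ : 0 < δ) : ∃ y ∈ M, (∀ j, b y j < 0) ∧ a y < a c + δ := by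
  have hlim : Tendsto (fun s : ℝ => (1 - s) * a c + s * a xh) (𝓝[>] 0)
      (𝓝 ((1 - 0) * a c + 0 * a xh)) :=
    ((by fun_prop : Continuous fun s : ℝ => (1 - s) * a c + s * a xh).tendsto 0).mono_left
      nhdsWithin_le_nhds
  have h1 : ∀ᶠ s : ℝ in 𝓝[>] 0, (1 - s) * a c + s * a xh < a c + δ :=
    hlim.eventually_lt_const (by linarith)
  have h2 : ∀ᶠ s : ℝ in 𝓝[>] 0, s < 1 :=
    nhdsWithin_le_nhds (eventually_lt_nhds zero_lt_one)
  obtain ⟨s, hs1, hs2, hs0⟩ := (h1.and (h2.and self_mem_nhdsWithin)).exists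
  have hs0' : (0 : ℝ) < s := hs0
  refine ⟨(1 - s) • c + s • xh, ha.1 hc hxh (by linarith) hs0'.le (by ring), fun j => ?_, ?_⟩
  · have := (hb j).2 hc hxh (by linarith : 0 ≤ 1 - s) hs0'.le (by ring)
    simp only [smul_eq_mul] at this
    have h3 : (1 - s) * b c j ≤ 0 :=
      mul_nonpos_of_nonneg_of_nonpos (by linarith) (hbc j)
    have h4 := mul_neg_of_pos_of_neg hs0' (hs j)
    linarith
  · have := ha.2 hc hxh (by linarith : 0 ≤ 1 - s) hs0'.le (by ring)
    simp only [smul_eq_mul] at this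
    linarith

/-- For `q` near `p` the perturbed problem has a solution in a fixed bounded set. -/
lemma exists_solution {f : (Fin n → ℝ) → (Fin l → ℝ) → ℝ}
    {h : (Fin n → ℝ) → (Fin l → ℝ) → Fin mi → ℝ} {p : Fin l → ℝ}
    {M : Set (Fin n → ℝ)} (hMc : IsClosed M) (hM : Convex ℝ M)
    (hfconv : ∀ q : Fin l → ℝ, ConvexOn ℝ M (fun x => f x q))
    (hhconv : ∀ (q : Fin l → ℝ) (j : Fin mi), ConvexOn ℝ M (fun x => h x q j))
    {N : Set (Fin l → ℝ)} (hN : N ∈ 𝓝 p)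
    (hfd : ContDiffOn ℝ 1 (fun q : (Fin n → ℝ) × (Fin l → ℝ) => f q.1 q.2) (M ×ˢ N))
    (hhd : ∀ j : Fin mi,
      ContDiffOn ℝ 1 (fun q : (Fin n → ℝ) × (Fin l → ℝ) => h q.1 q.2 j) (M ×ˢ N))
    {c : Fin n → ℝ} (hc : c ∈ M) (hhc : h c p ≤ 0)
    {R : ℝ} (hR0 : 0 < R) (hR : ∀ x ∈ M, h x p ≤ 0 → f x p ≤ f c p → dist x c < R)
    {xh : Fin n → ℝ} (hxh : xh ∈ M) (hs : ∀ j, h xh p j < 0) :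
    ∀ᶠ q in 𝓝 p, ∃ x ∈ M, dist x c ≤ R ∧ h x q ≤ 0 ∧ ∀ x' ∈ M, h x' q ≤ 0 → f x q ≤ f x' q := by
  obtain ⟨δ, hδ, hloc⟩ := exists_localization hMc hM hfconv hhconv hN hfd hhd hc hhc le_rfl hR0 hR
  obtain ⟨y, hy, hhy, hfy⟩ := exists_strictly_feasible (hfconv p) (hhconv p) hc hhc hxh hs hδ
  have hyM : ∀ᶠ _ in 𝓝 p, y ∈ M := Eventually.of_forall fun _ => hy
  have hev1 : ∀ᶠ q in 𝓝 p, f y q < f c p + δ :=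
    (tendsto_joint hN hfd hy hyM tendsto_const_nhds tendsto_id).eventually_lt_const hfy
  have hev2 : ∀ᶠ q in 𝓝 p, ∀ j, h y q j < 0 := eventually_all.2 fun j =>
    (tendsto_joint (F := fun x q => h x q j) hN (hhd j)
        hy hyM tendsto_const_nhds tendsto_id).eventually_lt_const (hhy j)
  filter_upwards [hloc, hev1, hev2, hN] with q hlocq hfq hhq hqN
  have hslice : ContinuousOn (fun x : Fin n → ℝ => (x, q)) M := by fun_prop
  have hmaps : MapsTo (fun x : Fin n → ℝ => (x, q)) M (M ×ˢ N) := fun x hx => ⟨hx, hqN⟩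
  have hfc : ContinuousOn (fun x => f x q) M := hfd.continuousOn.comp hslice hmaps
  have hhc' : ContinuousOn (fun x => h x q) M :=
    continuousOn_pi.2 fun j => (hhd j).continuousOn.comp hslice hmaps
  have hK : IsCompact (M ∩ Metric.closedBall c R) :=
    (isCompact_closedBall c R).inter_left hMc
  have hC : IsCompact ((M ∩ Metric.closedBall c R) ∩ (fun x => h x q) ⁻¹' Iic 0) :=
    hK.of_isClosed_subset
      ((hhc'.mono inter_subset_left).preimage_isClosed_of_isClosed hK.isClosed isClosed_Iic)
      inter_subset_left
  obtain ⟨x, ⟨⟨hxM, hxR⟩, hxh⟩, hmin⟩ := hC.exists_isMinOn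
    ⟨y, ⟨hy, hlocq y hy (fun j => (hhq j).le) hfq.le⟩, fun j => (hhq j).le⟩
    (hfc.mono (inter_subset_left.trans inter_subset_left))
  refine ⟨x, hxM, hxR, hxh, fun x' hx' hhx' => ?_⟩
  rcases le_or_gt (f x' q) (f c p + δ) with h1 | h1
  · exact hmin ⟨⟨hx', hlocq x' hx' hhx' h1⟩, hhx'⟩
  · have : f x q ≤ f y q :=
      hmin ⟨⟨hy, hlocq y hy (fun j => (hhq j).le) hfq.le⟩, fun j => (hhq j).le⟩
    linarith

lemma hoganVal_eq_of_min {f : (Fin n → ℝ) → (Fin l → ℝ) → ℝ}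
    {h : (Fin n → ℝ) → (Fin l → ℝ) → Fin mi → ℝ} {M : Set (Fin n → ℝ)} {q : Fin l → ℝ}
    {x : Fin n → ℝ} (hx : x ∈ M) (hhx : h x q ≤ 0)
    (hmin : ∀ x' ∈ M, h x' q ≤ 0 → f x q ≤ f x' q) : hoganVal f h M q = f x q := by
  refine IsLeast.csInf_eq ⟨⟨x, ⟨hx, hhx⟩, rfl⟩, ?_⟩
  rintro _ ⟨x', hx', rfl⟩
  exact hmin x' hx'.1 hx'.2

/-- At a solution, the multipliers are the `z ≥ 0` whose Lagrangian is bounded below on `M` by the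
optimal value; in particular the multiplier set is the same for all solutions. -/
lemma mem_hoganMult_iff {f : (Fin n → ℝ) → (Fin l → ℝ) → ℝ}
    {h : (Fin n → ℝ) → (Fin l → ℝ) → Fin mi → ℝ} {M : Set (Fin n → ℝ)} {q : Fin l → ℝ}
    {x : Fin n → ℝ} (hx : x ∈ hoganSol f h M q) {z : Fin mi → ℝ} :
    z ∈ hoganMult f h M q x ↔
      0 ≤ z ∧ ∀ x' ∈ M, hoganVal f h M q ≤ f x' q + ∑ j, z j * h x' q j := by
  constructor
  · rintro ⟨h0, hcs, hmin⟩
    refine ⟨h0, fun x' hx' => ?_⟩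
    have := hmin x' hx'
    rwa [hcs, add_zero, hx.2] at this
  · rintro ⟨h0, hmin⟩
    have h1 := hmin x hx.1.1
    rw [hx.2] at h1
    have h2 : ∑ j, z j * h x q j ≤ 0 :=
      Finset.sum_nonpos fun j _ => mul_nonpos_of_nonneg_of_nonpos (h0 j) (hx.1.2 j)
    have h3 : ∑ j, z j * h x q j = 0 := by linarith
    refine ⟨h0, h3, fun x' hx' => ?_⟩
    rw [h3, add_zero, hx.2]
    exact hmin x' hx'

/-! ### The saddle point of the parametric derivative of the Lagrangian -/

/-- The derivative at `p` in direction `d` of the Lagrangian `L(x, z, ·)`. -/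
noncomputable def lagDeriv (f : (Fin n → ℝ) → (Fin l → ℝ) → ℝ)
    (h : (Fin n → ℝ) → (Fin l → ℝ) → Fin mi → ℝ) (p d : Fin l → ℝ) (x : Fin n → ℝ)
    (z : Fin mi → ℝ) : ℝ :=
  fderiv ℝ (f x) p d + ∑ j, z j * fderiv ℝ (fun q => h x q j) p d

lemma tendsto_lag_quotient {f : (Fin n → ℝ) → (Fin l → ℝ) → ℝ}
    {h : (Fin n → ℝ) → (Fin l → ℝ) → Fin mi → ℝ} {p : Fin l → ℝ}
    {M : Set (Fin n → ℝ)} (hM : Convex ℝ M) {N : Set (Fin l → ℝ)} (hN : N ∈ 𝓝 p)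
    (hfd : ContDiffOn ℝ 1 (fun q : (Fin n → ℝ) × (Fin l → ℝ) => f q.1 q.2) (M ×ˢ N))
    (hhd : ∀ j : Fin mi,
      ContDiffOn ℝ 1 (fun q : (Fin n → ℝ) × (Fin l → ℝ) => h q.1 q.2 j) (M ×ˢ N))
    {x₀ : Fin n → ℝ} (hx₀ : x₀ ∈ M) {U : Filter ℝ} (hU : U ≤ 𝓝[>] 0) {X : ℝ → Fin n → ℝ}
    (hXM : ∀ᶠ t in U, X t ∈ M) (hX : Tendsto X U (𝓝 x₀)) {Z : ℝ → Fin mi → ℝ}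
    {z₀ : Fin mi → ℝ} (hZ : Tendsto Z U (𝓝 z₀)) (d : Fin l → ℝ) :
    Tendsto (fun t => ((f (X t) (p + t • d) + ∑ j, Z t j * h (X t) (p + t • d) j)
        - (f (X t) p + ∑ j, Z t j * h (X t) p j)) / t) U (𝓝 (lagDeriv f h p d x₀ z₀)) := by
  have h1 := tendsto_partial_quotient hM hN hfd hx₀ hU hXM hX d
  have h2 : ∀ j, Tendsto (fun t => Z t j * ((h (X t) (p + t • d) j - h (X t) p j) / t)) U
      (𝓝 (z₀ j * fderiv ℝ (fun q => h x₀ q j) p d)) := fun j =>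
    (tendsto_pi_nhds.1 hZ j).mul
      (tendsto_partial_quotient (F := fun x q => h x q j) hM hN (hhd j) hx₀ hU hXM hX d)
  refine (h1.add (tendsto_finsetSum Finset.univ fun j _ => h2 j)).congr fun t => ?_
  have : ∑ j, Z t j * ((h (X t) (p + t • d) j - h (X t) p j) / t)
      = (∑ j, Z t j * h (X t) (p + t • d) j - ∑ j, Z t j * h (X t) p j) / t := by
    rw [← Finset.sum_sub_distrib, Finset.sum_div]
    exact Finset.sum_congr rfl fun j _ => by ring
  rw [this]; ring

lemma fderiv_lag {f : (Fin n → ℝ) → (Fin l → ℝ) → ℝ}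
    {h : (Fin n → ℝ) → (Fin l → ℝ) → Fin mi → ℝ} {p : Fin l → ℝ}
    {M : Set (Fin n → ℝ)} (hM : Convex ℝ M) {N : Set (Fin l → ℝ)} (hN : N ∈ 𝓝 p)
    (hfd : ContDiffOn ℝ 1 (fun q : (Fin n → ℝ) × (Fin l → ℝ) => f q.1 q.2) (M ×ˢ N))
    (hhd : ∀ j : Fin mi,
      ContDiffOn ℝ 1 (fun q : (Fin n → ℝ) × (Fin l → ℝ) => h q.1 q.2 j) (M ×ˢ N))
    {x : Fin n → ℝ} (hx : x ∈ M) (z : Fin mi → ℝ) (d : Fin l → ℝ) :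
    fderiv ℝ (fun q => f x q + ∑ j, z j * h x q j) p d = lagDeriv f h p d x z := by
  obtain ⟨L, hL, -⟩ := exists_uniform_partial hM hN hfd hx
  have hh : ∀ j, HasFDerivAt (fun q => h x q j) (fderiv ℝ (fun q => h x q j) p) p := fun j => by
    obtain ⟨L', hL', -⟩ :=
      exists_uniform_partial (F := fun x q => h x q j) hM hN (hhd j) hx
    exact hL'.differentiableAt.hasFDerivAt
  have := hL.add (HasFDerivAt.fun_sum (u := Finset.univ) fun j _ => (hh j).const_mul (z j))
  have e := HasFDerivAt.fderiv this
  have hLe : fderiv ℝ (f x) p = L := hL.fderiv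
  rw [lagDeriv, hLe]
  refine (congrArg (fun T : (Fin l → ℝ) →L[ℝ] ℝ => T d) e).trans ?_
  simp

/-- Along an ultrafilter of step sizes, solutions and multipliers of the perturbed problems
converge to a pair `(x₀, z₀)`, the difference quotients of the value converge to the derivative of
the Lagrangian at this pair, and the pair is a saddle point of that derivative over the solutions
and multipliers at `p`. -/
lemma exists_saddle {f : (Fin n → ℝ) → (Fin l → ℝ) → ℝ}
    {h : (Fin n → ℝ) → (Fin l → ℝ) → Fin mi → ℝ} {p : Fin l → ℝ}
    {M : Set (Fin n → ℝ)} (hMc : IsClosed M) (hM : Convex ℝ M)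
    (hfconv : ∀ q : Fin l → ℝ, ConvexOn ℝ M (fun x => f x q))
    (hhconv : ∀ (q : Fin l → ℝ) (j : Fin mi), ConvexOn ℝ M (fun x => h x q j))
    {N : Set (Fin l → ℝ)} (hN : N ∈ 𝓝 p)
    (hfd : ContDiffOn ℝ 1 (fun q : (Fin n → ℝ) × (Fin l → ℝ) => f q.1 q.2) (M ×ˢ N))
    (hhd : ∀ j : Fin mi,
      ContDiffOn ℝ 1 (fun q : (Fin n → ℝ) × (Fin l → ℝ) => h q.1 q.2 j) (M ×ˢ N))
    (hSne : (hoganSol f h M p).Nonempty)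
    (hSbd : Bornology.IsBounded (hoganSol f h M p))
    (hbdd : BddBelow ((fun x' => f x' p) '' hoganFeas h M p))
    {xh : Fin n → ℝ} (hxh : xh ∈ M) {η : ℝ} (hη : 0 < η) (hs : ∀ j, h xh p j < -η)
    (d : Fin l → ℝ) (U : Ultrafilter ℝ) (hU : (U : Filter ℝ) ≤ 𝓝[>] 0) :
    ∃ x₀ ∈ hoganSol f h M p, ∃ z₀ : Fin mi → ℝ,
      (0 ≤ z₀ ∧ ∀ x' ∈ M, hoganVal f h M p ≤ f x' p + ∑ j, z₀ j * h x' p j) ∧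
      Tendsto (fun t : ℝ => (hoganVal f h M (p + t • d) - hoganVal f h M p) / t) U
        (𝓝 (lagDeriv f h p d x₀ z₀)) ∧
      (∀ z : Fin mi → ℝ,
        (0 ≤ z ∧ ∀ x' ∈ M, hoganVal f h M p ≤ f x' p + ∑ j, z j * h x' p j) →
        lagDeriv f h p d x₀ z ≤ lagDeriv f h p d x₀ z₀) ∧
      (∀ x ∈ hoganSol f h M p, lagDeriv f h p d x₀ z₀ ≤ lagDeriv f h p d x z₀) := by
  obtain ⟨c, ⟨hc, hhc⟩, hfc⟩ := hSne
  set v := hoganVal f h M p with hv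
  have hvle : ∀ x ∈ M, h x p ≤ 0 → v ≤ f x p := fun x hx hhx =>
    csInf_le hbdd ⟨x, ⟨hx, hhx⟩, rfl⟩
  have hs0 : ∀ j, h xh p j < 0 := fun j => (hs j).trans (by linarith)
  obtain ⟨R, hR0, hSR⟩ := hSbd.subset_ball_lt 0 c
  have hR : ∀ x ∈ M, h x p ≤ 0 → f x p ≤ f c p → dist x c < R := fun x hx hhx hfx =>
    hSR ⟨⟨hx, hhx⟩, le_antisymm (hfx.trans hfc.le) (hvle x hx hhx)⟩
  have hQ : Tendsto (fun t : ℝ => p + t • d) U (𝓝 p) := by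
    have : Tendsto (fun t : ℝ => p + t • d) (𝓝 0) (𝓝 (p + (0 : ℝ) • d)) :=
      (by fun_prop : Continuous fun t : ℝ => p + t • d).tendsto 0
    rw [zero_smul, add_zero] at this
    exact this.mono_left (hU.trans nhdsWithin_le_nhds)
  have hpos : ∀ᶠ t in (U : Filter ℝ), (0 : ℝ) < t := hU self_mem_nhdsWithin
  have hconst : ∀ {y : Fin n → ℝ}, y ∈ M → ∀ᶠ _ in (U : Filter ℝ), y ∈ M :=
    fun hy => Eventually.of_forall fun _ => hy
  -- Solutions of the perturbed problems and their limit.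
  have hsol := hQ.eventually
    (exists_solution hMc hM hfconv hhconv hN hfd hhd hc hhc hR0 hR hxh hs0)
  choose! X hX using fun (t : ℝ) (ht : ∃ x ∈ M, dist x c ≤ R ∧ h x (p + t • d) ≤ 0 ∧
    ∀ x' ∈ M, h x' (p + t • d) ≤ 0 → f x (p + t • d) ≤ f x' (p + t • d)) => ht
  have hXev := hsol.mono hX
  have hXM : ∀ᶠ t in (U : Filter ℝ), X t ∈ M := hXev.mono fun t ht => ht.1
  have hval : ∀ᶠ t in (U : Filter ℝ),
      hoganVal f h M (p + t • d) = f (X t) (p + t • d) := hXev.mono fun t ht =>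
    hoganVal_eq_of_min ht.1 ht.2.2.1 ht.2.2.2
  obtain ⟨x₀, ⟨hx₀M, -⟩, hXle⟩ :=
    ((isCompact_closedBall c R).inter_left hMc).ultrafilter_le_nhds (U.map X)
    (by
      refine tendsto_principal.2 ?_
      filter_upwards [hXev] with t ht
      exact ⟨ht.1, ht.2.1⟩)
  have hXt : Tendsto X U (𝓝 x₀) := hXle
  have hhx₀ : h x₀ p ≤ 0 := fun j =>
    le_of_tendsto (tendsto_joint (F := fun x q => h x q j) hN (hhd j) hx₀M hXM hXt hQ)
      (hXev.mono fun t ht => ht.2.2.1 j)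
  have hfX := tendsto_joint hN hfd hx₀M hXM hXt hQ
  have hfx₀ : f x₀ p = v := by
    refine le_antisymm (le_of_forall_pos_le_add fun δ hδ => ?_) (hvle x₀ hx₀M hhx₀)
    obtain ⟨y, hy, hhy, hfy⟩ := exists_strictly_feasible (hfconv p) (hhconv p) hc hhc hxh hs0 hδ
    have h1 := tendsto_joint hN hfd hy (hconst hy) tendsto_const_nhds hQ
    have h2 : ∀ᶠ t in (U : Filter ℝ), ∀ j, h y (p + t • d) j < 0 := eventually_all.2 fun j =>
      (tendsto_joint (F := fun x q => h x q j) hN (hhd j)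
        hy (hconst hy) tendsto_const_nhds hQ).eventually_lt_const (hhy j)
    have h3 : f x₀ p ≤ f y p := by
      refine le_of_tendsto_of_tendsto hfX h1 ?_
      filter_upwards [hXev, h2] with t ht ht2
      exact ht.2.2.2 y hy fun j => (ht2 j).le
    rw [hfc] at hfy
    linarith
  have hvalt : Tendsto (fun t : ℝ => hoganVal f h M (p + t • d)) U (𝓝 v) := by
    rw [← hfx₀]
    exact hfX.congr' (hval.mono fun t ht => ht.symm)
  -- Multipliers of the perturbed problems and their limit.
  have hslack : ∀ᶠ t in (U : Filter ℝ), ∀ j, h xh (p + t • d) j < -η := eventually_all.2 fun j =>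
    (tendsto_joint (F := fun x q => h x q j) hN (hhd j)
        hxh (hconst hxh) tendsto_const_nhds hQ).eventually_lt_const (hs j)
  have hgap : ∀ᶠ t in (U : Filter ℝ),
      f xh (p + t • d) - hoganVal f h M (p + t • d) < f xh p - v + 1 :=
    ((tendsto_joint hN hfd hxh (hconst hxh) tendsto_const_nhds hQ).sub hvalt).eventually_lt_const
      (by linarith)
  have hmult : ∀ᶠ t in (U : Filter ℝ), ∃ z : Fin mi → ℝ, 0 ≤ z ∧ ∀ x ∈ M,
      hoganVal f h M (p + t • d) ≤ f x (p + t • d) + ∑ j, z j * h x (p + t • d) j := by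
    filter_upwards [hXev, hval, hslack] with t ht hvt hst
    refine exists_multiplier (hfconv _) (hhconv _) (fun x hx hhx => ?_) hxh
      (fun j => (hst j).trans (by linarith))
    rw [hvt]; exact ht.2.2.2 x hx hhx
  choose! Z hZ using fun (t : ℝ) (ht : ∃ z : Fin mi → ℝ, 0 ≤ z ∧ ∀ x ∈ M,
    hoganVal f h M (p + t • d) ≤ f x (p + t • d) + ∑ j, z j * h x (p + t • d) j) => ht
  have hZev := hmult.mono hZ
  obtain ⟨z₀, ⟨hz₀, -⟩, hZle⟩ := (isCompact_Icc (a := (0 : Fin mi → ℝ))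
      (b := fun _ => (f xh p - v + 1) / η)).ultrafilter_le_nhds (U.map Z)
    (by
      refine tendsto_principal.2 ?_
      filter_upwards [hZev, hslack, hgap] with t ht hst hgt
      refine ⟨ht.1, fun j => ?_⟩
      refine (multiplier_le hη (fun j => (hst j).le) ht.1 (ht.2 xh hxh) j).trans ?_
      exact div_le_div_of_nonneg_right hgt.le hη.le)
  have hZt : Tendsto Z U (𝓝 z₀) := hZle
  have hz₀v : ∀ x' ∈ M, v ≤ f x' p + ∑ j, z₀ j * h x' p j := by
    intro x' hx'
    refine le_of_tendsto_of_tendsto hvalt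
      ((tendsto_joint hN hfd hx' (hconst hx') tendsto_const_nhds hQ).add
        (tendsto_finsetSum Finset.univ fun j _ => (tendsto_pi_nhds.1 hZt j).mul
          (tendsto_joint (F := fun x q => h x q j) hN (hhd j) hx' (hconst hx') tendsto_const_nhds hQ)))
      (hZev.mono fun t ht => ht.2 x' hx')
  have hlow : ∀ z : Fin mi → ℝ, (0 ≤ z ∧ ∀ x' ∈ M, v ≤ f x' p + ∑ j, z j * h x' p j) →
      ∀ᶠ t in (U : Filter ℝ),
        ((f (X t) (p + t • d) + ∑ j, z j * h (X t) (p + t • d) j)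
          - (f (X t) p + ∑ j, z j * h (X t) p j)) / t
        ≤ (hoganVal f h M (p + t • d) - v) / t := by
    rintro z ⟨hz, hzv⟩
    filter_upwards [hXev, hval, hpos] with t ht hvt htp
    have h1 : ∑ j, z j * h (X t) (p + t • d) j ≤ 0 :=
      Finset.sum_nonpos fun j _ => mul_nonpos_of_nonneg_of_nonpos (hz j) (ht.2.2.1 j)
    have h2 := hzv (X t) ht.1
    rw [hvt]
    gcongr
    linarith
  have hup : ∀ x ∈ hoganSol f h M p, ∀ᶠ t in (U : Filter ℝ),
      (hoganVal f h M (p + t • d) - v) / t ≤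
        ((f x (p + t • d) + ∑ j, Z t j * h x (p + t • d) j)
          - (f x p + ∑ j, Z t j * h x p j)) / t := by
    rintro x ⟨⟨hx, hhx⟩, hfx⟩
    filter_upwards [hZev, hpos] with t ht htp
    have h1 : ∑ j, Z t j * h x p j ≤ 0 :=
      Finset.sum_nonpos fun j _ => mul_nonpos_of_nonneg_of_nonpos (ht.1 j) (hhx j)
    have h2 := ht.2 x hx
    have h3 : f x p = v := hfx
    gcongr
    linarith
  have hx₀S : x₀ ∈ hoganSol f h M p := ⟨⟨hx₀M, hhx₀⟩, hfx₀⟩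
  have tlow : ∀ z : Fin mi → ℝ, _ := fun z =>
    tendsto_lag_quotient hM hN hfd hhd hx₀M hU hXM hXt (tendsto_const_nhds (x := z)) d
  have tup : ∀ x : Fin n → ℝ, ∀ hx : x ∈ M, _ := fun x hx =>
    tendsto_lag_quotient hM hN hfd hhd hx hU (hconst hx) tendsto_const_nhds hZt d
  have hlim : Tendsto (fun t : ℝ => (hoganVal f h M (p + t • d) - v) / t) U
      (𝓝 (lagDeriv f h p d x₀ z₀)) :=
    tendsto_of_tendsto_of_tendsto_of_le_of_le' (tlow z₀) (tup x₀ hx₀M)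
      (hlow z₀ ⟨hz₀, hz₀v⟩) (hup x₀ hx₀S)
  exact ⟨x₀, hx₀S, z₀, ⟨hz₀, hz₀v⟩, hlim,
    fun z hz => le_of_tendsto_of_tendsto (tlow z) hlim (hlow z hz),
    fun x hx => le_of_tendsto_of_tendsto hlim (tup x hx.1.1) (hup x hx)⟩

/-- **Hogan.** For a convex parametric program over a fixed closed
convex set `M` with inequality constraints, under boundedness of the solution
set, finiteness of the value and Slater's condition, the value function is
directionally differentiable with
`φ'(p;h) = min_{x ∈ Σ(p)} max_{z ∈ M_p(x)} ∇_p L(x,z,p)ᵀ h`. -/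
theorem hogan
    (M : Set (Fin n → ℝ)) (hMc : IsClosed M) (hMconv : Convex ℝ M)
    (hfconv : ∀ q : Fin l → ℝ, ConvexOn ℝ M (fun x' => f x' q))
    (hhconv : ∀ (q : Fin l → ℝ) (j : Fin mi), ConvexOn ℝ M (fun x' => h x' q j))
    (N : Set (Fin l → ℝ)) (hN : N ∈ 𝓝 p)
    (hfd : ContDiffOn ℝ 1 (fun q : (Fin n → ℝ) × (Fin l → ℝ) => f q.1 q.2) (M ×ˢ N))
    (hhd : ∀ j : Fin mi,
      ContDiffOn ℝ 1 (fun q : (Fin n → ℝ) × (Fin l → ℝ) => h q.1 q.2 j) (M ×ˢ N))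
    -- (i) the solution set is nonempty and bounded
    (hSne : (hoganSol f h M p).Nonempty)
    (hSbd : Bornology.IsBounded (hoganSol f h M p))
    -- (ii) the optimal value is finite
    (hfin : (hoganFeas h M p).Nonempty ∧
      BddBelow ((fun x' => f x' p) '' hoganFeas h M p))
    -- (iii) Slater's condition
    (hslater : ∃ xh ∈ M, ∀ j, h xh p j < 0) :
    ∀ hdir : Fin l → ℝ,
      Tendsto
        (fun t : ℝ => (hoganVal f h M (p + t • hdir) - hoganVal f h M p) / t)
        (𝓝[>] (0 : ℝ))
        (𝓝 (sInf ((fun x' =>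
          sSup ((fun z' =>
              fderiv ℝ (fun p' => f x' p' + ∑ j, z' j * h x' p' j) p hdir) ''
            hoganMult f h M p x')) '' hoganSol f h M p))) := by
  intro d
  obtain ⟨xh, hxh, hs⟩ := hslater
  obtain ⟨η, hη, hsη⟩ : ∃ η > 0, ∀ j, h xh p j < -η := by
    have hev : ∀ᶠ η : ℝ in 𝓝[>] 0, ∀ j, h xh p j < -η := eventually_all.2 fun j => by
      filter_upwards [nhdsWithin_le_nhds (eventually_lt_nhds (neg_pos.2 (hs j)))] with η hη
      linarith
    obtain ⟨η, h1, h2⟩ := (hev.and self_mem_nhdsWithin).exists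
    exact ⟨η, h2, h1⟩
  rw [tendsto_iff_ultrafilter]
  intro U hU
  obtain ⟨x₀, hx₀, z₀, hz₀, hlim, hmax, hmin⟩ := exists_saddle hMc hMconv hfconv hhconv hN hfd hhd
    hSne hSbd hfin.2 hxh hη hsη d U hU
  have himg : ∀ x ∈ hoganSol f h M p,
      (fun z' => fderiv ℝ (fun p' => f x p' + ∑ j, z' j * h x p' j) p d) '' hoganMult f h M p x
        = lagDeriv f h p d x '' hoganMult f h M p x := fun x hx =>
    image_congr fun z _ => fderiv_lag hMconv hN hfd hhd hx.1.1 z d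
  have hbdd : ∀ x ∈ hoganSol f h M p,
      BddAbove (lagDeriv f h p d x '' hoganMult f h M p x) := by
    intro x hx
    refine (((isCompact_Icc (a := (0 : Fin mi → ℝ))
      (b := fun _ => (f xh p - hoganVal f h M p) / η)).image
        (f := lagDeriv f h p d x) ?_).bddAbove).mono (image_mono fun z hz => ?_)
    · unfold lagDeriv; fun_prop
    · have hz' := (mem_hoganMult_iff hx).1 hz
      exact ⟨hz'.1, multiplier_le hη (fun j => (hsη j).le) hz'.1 (hz'.2 xh hxh)⟩
  have hV : IsLeast ((fun x' => sSup ((fun z' =>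
      fderiv ℝ (fun p' => f x' p' + ∑ j, z' j * h x' p' j) p d) '' hoganMult f h M p x'))
        '' hoganSol f h M p) (lagDeriv f h p d x₀ z₀) := by
    refine ⟨⟨x₀, hx₀, ?_⟩, ?_⟩
    · simp only
      rw [himg x₀ hx₀]
      refine IsGreatest.csSup_eq ⟨⟨z₀, (mem_hoganMult_iff hx₀).2 hz₀, rfl⟩, ?_⟩
      rintro _ ⟨z, hz, rfl⟩
      exact hmax z ((mem_hoganMult_iff hx₀).1 hz)
    · rintro _ ⟨x, hx, rfl⟩
      simp only
      rw [himg x hx]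
      exact (hmin x hx).trans
        (le_csSup (hbdd x hx) ⟨z₀, (mem_hoganMult_iff hx).2 hz₀, rfl⟩)
  rw [hV.csInf_eq]
  exact hlim

end SensNLP
end
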